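/- Let d ≥ 2. For all sufficiently small ρ ∈ (0,1) there exist constants 0 < a_ρ < b_ρ < 1 and ε_ρ > 0, depending only on d and ρ, with the following property: if A ⊆ ℝ^d is a Borel set for which there exist an exponent s > d − ε_ρ and a sequence R_n → ∞ with R_{n+1}/R_n ≤ b_ρ/a_ρ such that sup_{x ∈ ℝ^d} H^s_∞(A_{R_n}(x)) > 1 − ρ for all sufficiently large n, then A admits all sufficiently large distances, i.e. there exists M > 0 with Δ(A) ⊇ [M, ∞). -/

import Mathlib

open MeasureTheory Set Metric Filter
open scoped ENNReal NNReal Topology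

noncomputable section

abbrev Euc (d : ℕ) : Type := EuclideanSpace ℝ (Fin d)

/-- The closed unit cube `[0,1]^d`. -/
def unitCube (d : ℕ) : Set (Euc d) := {x | ∀ i, x i ∈ Icc (0:ℝ) 1}

/-- The distance set `Δ(E,F) = {|x-y| : x ∈ E, y ∈ F}`. -/
def distSet {d : ℕ} (E F : Set (Euc d)) : Set ℝ :=
  {t | ∃ x ∈ E, ∃ y ∈ F, dist x y = t}

/-- `Q` is a dyadic cube of side length `l`, i.e. `Q = 2^{-k}(m + [0,1]^d)`. -/
def IsDyadicCube {d : ℕ} (Q : Set (Euc d)) (l : ℝ) : Prop :=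
  ∃ (k : ℤ) (m : Fin d → ℤ), l = (2:ℝ) ^ (-k) ∧
    Q = {x | ∀ i, (m i : ℝ) * (2:ℝ) ^ (-k) ≤ x i ∧ x i ≤ ((m i : ℝ) + 1) * (2:ℝ) ^ (-k)}

/-- The `s`-dimensional dyadic Hausdorff content: the infimum of `∑ ℓ(Q_i)^s` over
countable covers of `E` by dyadic cubes. -/
def dyadicContent {d : ℕ} (s : ℝ) (E : Set (Euc d)) : ℝ≥0∞ :=
  ⨅ (Q : ℕ → Set (Euc d)) (l : ℕ → ℝ) (_ : ∀ i, IsDyadicCube (Q i) (l i))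
    (_ : E ⊆ ⋃ i, Q i), ∑' i, ENNReal.ofReal (l i ^ s)

/-- The normalized truncation `A_R(x) = T_{x,R}[A ∩ (x + [0,R]^d)]`,
where `T_{x,R}(y) = (y - x)/R`. -/
def normTrunc {d : ℕ} (A : Set (Euc d)) (R : ℝ) (x : Euc d) : Set (Euc d) :=
  (fun y => R⁻¹ • (y - x)) '' (A ∩ {y : Euc d | ∀ i, y i - x i ∈ Icc (0:ℝ) R})

section TreeContent

variable {X ι : Type}

/-- A family of cells covers `E`. -/
def Cov (code : ℕ → X → ι) (S : Set (ℕ × ι)) (E : Set X) : Prop :=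
  ∀ x ∈ E, ∃ j, (j, code j x) ∈ S

def TW [MeasurableSpace ι] (w : ℕ → ℝ≥0∞) : Measure (ℕ × ι) :=
  Measure.count.withDensity (fun p => w p.1)

def TC [MeasurableSpace ι] (code : ℕ → X → ι) (w : ℕ → ℝ≥0∞) (E : Set X) : ℝ≥0∞ :=
  ⨅ (S : Set (ℕ × ι)) (_ : Cov code S E), TW w S

def mx (par : ι → ι) (S : Set (ℕ × ι)) : Set (ℕ × ι) :=
  {p | p ∈ S ∧ ∀ i, i < p.1 → (i, par^[p.1 - i] p.2) ∉ S}

theorem code_anc {code : ℕ → X → ι} {par : ι → ι} (hpar : ∀ j x, code j x = par (code (j+1) x))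
    (x : X) (i n : ℕ) : par^[n] (code (i + n) x) = code i x := by
  induction n with
  | zero => rfl
  | succ n ih => rw [Function.iterate_succ_apply, ← add_assoc, ← hpar, ih]

theorem cov_mx {code : ℕ → X → ι} {par : ι → ι} (hpar : ∀ j x, code j x = par (code (j+1) x))
    {S : Set (ℕ × ι)} {E : Set X} (h : Cov code S E) : Cov code (mx par S) E := by
  classical
  intro x hx
  have hex := h x hx
  refine ⟨Nat.find hex, Nat.find_spec hex, ?_⟩
  intro i hi
  have := code_anc hpar x i (Nat.find hex - i)
  simp only at hi
  rw [Nat.add_sub_cancel' hi.le] at this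
  simp only [this]
  exact Nat.find_min hex hi

theorem TC_le [MeasurableSpace ι] {code : ℕ → X → ι} {w : ℕ → ℝ≥0∞} {E : Set X} {S : Set (ℕ × ι)}
    (h : Cov code S E) : TC code w E ≤ TW w S := iInf₂_le S h

theorem TC_mono [MeasurableSpace ι] {code : ℕ → X → ι} {w : ℕ → ℝ≥0∞} {E F : Set X} (h : E ⊆ F) :
    TC code w E ≤ TC code w F :=
  le_iInf₂ fun S hS => TC_le fun x hx => hS x (h hx)

theorem exists_cov [MeasurableSpace ι] {code : ℕ → X → ι} {w : ℕ → ℝ≥0∞} {E : Set X} {c : ℝ≥0∞}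
    (h : TC code w E < c) : ∃ S, Cov code S E ∧ TW w S < c := by
  unfold TC at h
  simp only [iInf_lt_iff] at h
  obtain ⟨S, hS, h⟩ := h
  exact ⟨S, hS, h⟩

theorem TC_union [MeasurableSpace ι] {code : ℕ → X → ι} {w : ℕ → ℝ≥0∞} (E F : Set X) :
    TC code w (E ∪ F) ≤ TC code w E + TC code w F := by
  refine ENNReal.le_of_forall_pos_le_add fun ε hε hfin => ?_
  have hE : TC code w E ≠ ∞ := (lt_of_le_of_lt le_self_add hfin).ne
  have hF : TC code w F ≠ ∞ := (lt_of_le_of_lt le_add_self hfin).ne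
  have hε2 : ((ε / 2 : ℝ≥0) : ℝ≥0∞) ≠ 0 := by
    simpa using hε.ne'
  obtain ⟨S, hS, h1⟩ := exists_cov (ENNReal.lt_add_right hE hε2)
  obtain ⟨S', hS', h2⟩ := exists_cov (ENNReal.lt_add_right hF hε2)
  have hc : Cov code (S ∪ S') (E ∪ F) := by
    rintro x (hx | hx)
    · obtain ⟨j, hj⟩ := hS x hx; exact ⟨j, Or.inl hj⟩
    · obtain ⟨j, hj⟩ := hS' x hx; exact ⟨j, Or.inr hj⟩
  calc TC code w (E ∪ F) ≤ TW w (S ∪ S') := TC_le hc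
    _ ≤ TW w S + TW w S' := measure_union_le _ _
    _ ≤ (TC code w E + (ε / 2 : ℝ≥0)) + (TC code w F + (ε / 2 : ℝ≥0)) := add_le_add h1.le h2.le
    _ = TC code w E + TC code w F + ε := by
      have : (ε : ℝ≥0∞) = ((ε / 2 : ℝ≥0) : ℝ≥0∞) + ((ε / 2 : ℝ≥0) : ℝ≥0∞) := by
        rw [← ENNReal.coe_add, add_halves]
      rw [this]; ring

theorem TC_empty [MeasurableSpace ι] {code : ℕ → X → ι} {w : ℕ → ℝ≥0∞} :
    TC code w ∅ = 0 := by
  have : TC code w ∅ ≤ TW w (∅ : Set (ℕ × ι)) := TC_le (fun x hx => hx.elim)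
  simpa using this

theorem TC_biUnion [MeasurableSpace ι] {code : ℕ → X → ι} {w : ℕ → ℝ≥0∞} {κ : Type} (s : Finset κ)
    (f : κ → Set X) : TC code w (⋃ c ∈ s, f c) ≤ ∑ c ∈ s, TC code w (f c) := by
  classical
  induction s using Finset.induction_on with
  | empty => simp [TC_empty]
  | insert a s ha ih =>
    rw [Finset.set_biUnion_insert, Finset.sum_insert ha]
    exact (TC_union _ _).trans (add_le_add le_rfl ih)

variable [MeasurableSpace ι] [Countable ι] [MeasurableSingletonClass ι]

theorem strong_sub {code : ℕ → X → ι} {par : ι → ι} (hpar : ∀ j x, code j x = par (code (j+1) x))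
    {w : ℕ → ℝ≥0∞} {A Q : Set (ℕ × ι)} {E : Set X} (hA : Cov code A E) (hQ : Cov code Q E) :
    TW w (mx par (A ∪ Q)) + TC code w E ≤ TW w A + TW w Q := by
  have hm : ∀ S : Set (ℕ × ι), MeasurableSet S := fun S => (Set.to_countable S).measurableSet
  have hsub : mx par (A ∪ Q) ⊆ A ∪ Q := fun p hp => hp.1
  have hcov : Cov code (((A ∪ Q) \ mx par (A ∪ Q)) ∪ (A ∩ Q)) E := by
    intro x hx
    obtain ⟨i, hi⟩ := hA x hx
    obtain ⟨j, hj⟩ := hQ x hx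
    rcases lt_trichotomy i j with h | h | h
    · refine ⟨j, Or.inl ⟨Or.inr hj, fun hmx => hmx.2 i h ?_⟩⟩
      have := code_anc hpar x i (j - i)
      rw [Nat.add_sub_cancel' h.le] at this
      simp only [this]; exact Or.inl hi
    · subst h; exact ⟨i, Or.inr ⟨hi, hj⟩⟩
    · refine ⟨i, Or.inl ⟨Or.inl hi, fun hmx => hmx.2 j h ?_⟩⟩
      have := code_anc hpar x j (i - j)
      rw [Nat.add_sub_cancel' h.le] at this
      simp only [this]; exact Or.inr hj
  calc TW w (mx par (A ∪ Q)) + TC code w E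
      ≤ TW w (mx par (A ∪ Q)) + (TW w ((A ∪ Q) \ mx par (A ∪ Q)) + TW w (A ∩ Q)) := by
        gcongr; exact (TC_le hcov).trans (measure_union_le _ _)
    _ = TW w (A ∪ Q) + TW w (A ∩ Q) := by
        rw [← add_assoc, ← measure_union disjoint_sdiff_right (hm _), union_diff_cancel hsub]
    _ = TW w A + TW w Q := measure_union_add_inter A (hm Q)

/-- Increasing sets lemma. -/
theorem TC_iUnion {code : ℕ → X → ι} {par : ι → ι} (hpar : ∀ j x, code j x = par (code (j+1) x))
    {w : ℕ → ℝ≥0∞} (hfin : ∀ E, TC code w E ≠ ∞) {E : ℕ → Set X} (hE : Monotone E) {c : ℝ≥0∞}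
    (hc : ∀ n, TC code w (E n) ≤ c) : TC code w (⋃ n, E n) ≤ c := by
  refine ENNReal.le_of_forall_pos_le_add fun ε hε hcfin => ?_
  obtain ⟨δ, hδ, hδsum⟩ := ENNReal.exists_pos_sum_of_countable
    (ε := (ε : ℝ≥0∞)) (by simpa using hε.ne') ℕ
  have hex : ∀ n, ∃ S, Cov code S (E n) ∧ TW w S < TC code w (E n) + δ n := fun n =>
    exists_cov (ENNReal.lt_add_right (hfin _) (by simpa using (hδ n).ne'))
  choose Q hQ hQw using hex
  let A : ℕ → Set (ℕ × ι) := fun n => Nat.rec (Q 0) (fun n a => mx par (a ∪ Q (n+1))) n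
  have hA0 : A 0 = Q 0 := rfl
  have hAs : ∀ n, A (n+1) = mx par (A n ∪ Q (n+1)) := fun n => rfl
  have hAcov : ∀ n, Cov code (A n) (E n) := by
    intro n
    cases n with
    | zero => rw [hA0]; exact hQ 0
    | succ n =>
      rw [hAs]; apply cov_mx hpar
      intro x hx; obtain ⟨j, hj⟩ := hQ (n+1) x hx; exact ⟨j, Or.inr hj⟩
  have hAw : ∀ n, TW w (A n) ≤ TC code w (E n) + ∑ i ∈ Finset.range (n+1), (δ i : ℝ≥0∞) := by
    intro n
    induction n with
    | zero => rw [hA0]; simpa using (hQw 0).le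
    | succ n ih =>
      have h1 := strong_sub (w := w) hpar (hAcov n)
        (fun x hx => hQ (n+1) x (hE (Nat.le_succ n) hx))
      rw [← hAs] at h1
      have h2 : TW w (A (n+1)) + TC code w (E n) ≤
          (TC code w (E (n+1)) + ∑ i ∈ Finset.range (n+1+1), (δ i : ℝ≥0∞)) + TC code w (E n) := by
        refine h1.trans ((add_le_add ih (hQw (n+1)).le).trans (le_of_eq ?_))
        rw [Finset.sum_range_succ _ (n+1)]; ring
      exact (ENNReal.add_le_add_iff_right (hfin _)).1 h2
  have hAsub : ∀ n, A n ⊆ ⋃ i, Q i := by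
    intro n
    induction n with
    | zero => rw [hA0]; exact subset_iUnion Q 0
    | succ n ih =>
      rw [hAs]; intro p hp
      rcases hp.1 with h | h
      · exact ih h
      · exact mem_iUnion.2 ⟨_, h⟩
  have hin : ∀ n m, m ≤ n → mx par (⋃ i, Q i) ∩ Q m ⊆ A n := by
    intro n
    induction n with
    | zero => intro m hm p hp; obtain rfl : m = 0 := by omega
              exact hp.2
    | succ n ih =>
      intro m hm p hp
      rw [hAs]
      refine ⟨?_, ?_⟩
      · rcases Nat.lt_or_ge n m with h | h
        · obtain rfl : m = n + 1 := by omega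
          exact Or.inr hp.2
        · exact Or.inl (ih m h hp)
      · intro i hi hmem
        refine hp.1.2 i hi ?_
        rcases hmem with h | h
        · exact hAsub n h
        · exact mem_iUnion.2 ⟨_, h⟩
  have hcovU : Cov code (mx par (⋃ i, Q i)) (⋃ n, E n) := by
    apply cov_mx hpar
    intro x hx
    obtain ⟨n, hn⟩ := mem_iUnion.1 hx
    obtain ⟨j, hj⟩ := hQ n x hn
    exact ⟨j, mem_iUnion.2 ⟨n, hj⟩⟩
  refine (TC_le hcovU).trans ?_
  have heq : mx par (⋃ i, Q i) = ⋃ n, (mx par (⋃ i, Q i) ∩ ⋃ m, ⋃ (_ : m ≤ n), Q m) := by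
    ext p
    constructor
    · intro hp
      obtain ⟨m, hm⟩ := mem_iUnion.1 hp.1
      exact mem_iUnion.2 ⟨m, hp, mem_iUnion₂.2 ⟨m, le_rfl, hm⟩⟩
    · intro hp
      obtain ⟨m, hm⟩ := mem_iUnion.1 hp
      exact hm.1
  have hmono : Monotone fun n => (mx par (⋃ i, Q i) ∩ ⋃ m, ⋃ (_ : m ≤ n), Q m) := by
    intro a b hab p hp
    obtain ⟨m, hm, hp'⟩ := mem_iUnion₂.1 hp.2
    exact ⟨hp.1, mem_iUnion₂.2 ⟨m, hm.trans hab, hp'⟩⟩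
  rw [heq, hmono.measure_iUnion]
  refine iSup_le fun n => ?_
  have hsub : (mx par (⋃ i, Q i) ∩ ⋃ m, ⋃ (_ : m ≤ n), Q m) ⊆ A n := by
    intro p hp
    obtain ⟨m, hm, hp'⟩ := mem_iUnion₂.1 hp.2
    exact hin n m hm ⟨hp.1, hp'⟩
  refine (measure_mono hsub).trans ((hAw n).trans (add_le_add (hc n) ?_))
  exact (ENNReal.sum_le_tsum _).trans hδsum.le

end TreeContent

theorem capacitable {X : Type} [TopologicalSpace X] {Φ : Set X → ℝ≥0∞} {c : ℝ≥0∞}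
    (hinc : ∀ E : ℕ → Set X, Monotone E → (∀ n, Φ (E n) ≤ c) → Φ (⋃ n, E n) ≤ c)
    {E : Set X} (hE : AnalyticSet E) (hc : c < Φ E) :
    ∃ K ⊆ E, IsCompact K ∧ ∀ U, IsOpen U → K ⊆ U → ∃ V ⊆ U, V ⊆ E ∧ c < Φ V := by
  rw [AnalyticSet] at hE
  rcases hE with rfl | ⟨f, hf, rfl⟩
  · exact ⟨∅, le_rfl, isCompact_empty, fun U _ _ => ⟨∅, empty_subset _, le_rfl, hc⟩⟩
  let S : (ℕ → ℕ) → ℕ → Set (ℕ → ℕ) := fun b k => {σ | ∀ i < k, σ i ≤ b i}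
  have step : ∀ k b, c < Φ (f '' S b k) → ∃ n, c < Φ (f '' S (Function.update b k n) (k+1)) := by
    intro k b h
    by_contra! hcon
    have hmono : Monotone fun n => f '' S (Function.update b k n) (k+1) := by
      intro n m hnm
      apply image_mono
      intro σ hσ i hi
      have := hσ i hi
      by_cases hik : i = k
      · subst hik; simp at this ⊢; omega
      · simpa [hik] using this
    have := hinc _ hmono hcon
    rw [← image_iUnion] at this
    have heq : ⋃ n, S (Function.update b k n) (k+1) = S b k := by
      ext σ
      simp only [mem_iUnion]
      constructor
      · rintro ⟨n, hn⟩ i hi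
        have := hn i (by omega)
        rwa [Function.update_of_ne (by omega)] at this
      · intro h
        refine ⟨σ k, fun i hi => ?_⟩
        by_cases hik : i = k
        · subst hik; simp
        · rw [Function.update_of_ne hik]; exact h i (by omega)
    rw [heq] at this
    exact absurd h (not_lt.2 this)
  choose! g hg using step
  let B : ℕ → (ℕ → ℕ) := fun k => Nat.rec (fun _ => 0) (fun k b => Function.update b k (g k b)) k
  have hBs : ∀ k, B (k+1) = Function.update (B k) k (g k (B k)) := fun k => rfl
  have hB : ∀ k, c < Φ (f '' S (B k) k) := by
    intro k
    induction k with
    | zero =>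
      have : S (B 0) 0 = univ := by ext; simp [S]
      rw [this, image_univ]; exact hc
    | succ k ih => rw [hBs]; exact hg k (B k) ih
  let b : ℕ → ℕ := fun i => B (i+1) i
  have hBb : ∀ k i, i < k → B k i = b i := by
    intro k
    induction k with
    | zero => intro i hi; omega
    | succ k ih =>
      intro i hi
      by_cases hik : i = k
      · subst hik; rfl
      · rw [hBs, Function.update_of_ne hik]; exact ih i (by omega)
  have hSb : ∀ k, S (B k) k = S b k := by
    intro k; ext σ
    constructor
    · intro h i hi; rw [← hBb k i hi]; exact h i hi
    · intro h i hi; rw [hBb k i hi]; exact h i hi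
  let C : Set (ℕ → ℕ) := univ.pi fun i => Iic (b i)
  have hC : IsCompact C := isCompact_univ_pi fun i => (finite_Iic (b i)).isCompact
  refine ⟨f '' C, image_subset_range _ _, hC.image hf, fun U hU hKU => ?_⟩
  suffices h : ∃ k, f '' S b k ⊆ U by
    obtain ⟨k, hk⟩ := h
    exact ⟨f '' S b k, hk, image_subset_range _ _, by rw [← hSb]; exact hB k⟩
  by_contra! hcon
  have hcon' : ∀ k, ∃ σ ∈ S b k, f σ ∉ U := by
    intro k
    obtain ⟨_, ⟨σ, hσ, rfl⟩, h⟩ := not_subset.1 (hcon k)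
    exact ⟨σ, hσ, h⟩
  choose σ hσ hσU using hcon'
  let τ : ℕ → (ℕ → ℕ) := fun k i => min (σ k i) (b i)
  obtain ⟨τ', hτ', φ, hφ, hlim⟩ := hC.tendsto_subseq (x := τ) (fun k i _ => (show min (σ k i) (b i) ≤ b i from min_le_right _ _))
  have hlim2 : Tendsto (fun k => σ (φ k)) atTop (𝓝 τ') := by
    rw [tendsto_pi_nhds] at hlim ⊢
    intro i
    refine (hlim i).congr' ?_
    filter_upwards [eventually_gt_atTop i] with k hk
    exact min_eq_left (hσ (φ k) i (hk.trans_le (hφ.id_le k)))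
  have h3 := (hf.tendsto τ').comp hlim2
  have h4 : f τ' ∈ Uᶜ := hU.isClosed_compl.mem_of_tendsto h3 (Eventually.of_forall fun k => hσU _)
  exact h4 (hKU ⟨τ', hτ', rfl⟩)

abbrev Idx (d : ℕ) : Type := Fin d → ℕ

def cpar {d : ℕ} (m : Idx d) : Idx d := fun i => m i / 2

def ccode {d : ℕ} (j : ℕ) (x : Euc d) : Idx d := fun i => min ⌊(2:ℝ) ^ j * x i⌋₊ (2 ^ j - 1)

def BB (d j : ℕ) : Finset (Idx d) := Fintype.piFinset fun _ => Finset.range (2 ^ j)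

theorem ccode_mem {d : ℕ} (j : ℕ) (x : Euc d) : ccode j x ∈ BB d j := by
  simp only [BB, Fintype.mem_piFinset, Finset.mem_range, ccode]
  intro i
  have : 0 < 2 ^ j := by positivity
  omega

theorem card_BB (d j : ℕ) : (BB d j).card = 2 ^ (j * d) := by
  simp [BB, pow_mul]

theorem ccode_par {d : ℕ} (j : ℕ) (x : Euc d) : ccode j x = cpar (ccode (j+1) x) := by
  funext i
  simp only [ccode, cpar]
  have h1 : ⌊(2:ℝ) ^ j * x i⌋₊ = ⌊(2:ℝ) ^ (j+1) * x i⌋₊ / 2 := by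
    rw [← Nat.floor_div_ofNat]
    congr 1
    rw [pow_succ]; simp; ring
  rw [h1]
  have : 2 ^ (j+1) = 2 * 2 ^ j := by ring
  have : 0 < 2 ^ j := by positivity
  omega

theorem ccode_bounds {d : ℕ} (j : ℕ) {x : Euc d} (hx : x ∈ unitCube d) (i : Fin d) :
    (ccode j x i : ℝ) ≤ 2 ^ j * x i ∧ 2 ^ j * x i ≤ ccode j x i + 1 := by
  obtain ⟨h0, h1⟩ := hx i
  have hp : (0:ℝ) < 2 ^ j := by positivity
  have hn : 0 ≤ (2:ℝ) ^ j * x i := by positivity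
  simp only [ccode]
  constructor
  · refine le_trans ?_ (Nat.floor_le hn)
    exact_mod_cast min_le_left _ _
  · rcases le_total ⌊(2:ℝ) ^ j * x i⌋₊ (2 ^ j - 1) with h | h
    · rw [min_eq_left h]; exact (Nat.lt_floor_add_one _).le
    · rw [min_eq_right h]
      have h2 : 1 ≤ 2 ^ j := Nat.one_le_two_pow
      push_cast [Nat.cast_sub h2]
      nlinarith

/-- weight -/
def wt (s : ℝ) (j : ℕ) : ℝ≥0∞ := ENNReal.ofReal ((2:ℝ) ^ (-(j * s)))

theorem TW_singleton {d : ℕ} (w : ℕ → ℝ≥0∞) (p : ℕ × Idx d) : TW w {p} = w p.1 := by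
  simp [TW]

theorem TC_cell_le {d : ℕ} (w : ℕ → ℝ≥0∞) (V : Set (Euc d)) (j : ℕ) (q : Idx d) :
    TC ccode w (V ∩ {x | ccode j x = q}) ≤ w j := by
  rw [← TW_singleton w (j, q)]
  apply TC_le
  rintro x ⟨_, hx⟩
  exact ⟨j, by simp [show ccode j x = q from hx]⟩

theorem wt_ne_top (s : ℝ) (j : ℕ) : wt s j ≠ ∞ := ENNReal.ofReal_ne_top

theorem TC_ne_top {d : ℕ} (s : ℝ) (V : Set (Euc d)) : TC ccode (wt s) V ≠ ∞ := by
  have h := TC_cell_le (wt s) V 0 (fun _ => 0)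
  have : V ∩ {x | ccode 0 x = fun _ => 0} = V := by
    ext x; simp only [mem_inter_iff, and_iff_left_iff_imp]; intro _
    simp only [mem_setOf_eq]; funext i; simp [ccode]
  rw [this] at h
  exact ne_top_of_le_ne_top (wt_ne_top s 0) h

theorem TW_eq_tsum {d : ℕ} (w : ℕ → ℝ≥0∞) (S : Set (ℕ × Idx d)) :
    TW w S = ∑' p, S.indicator (fun p => w p.1) p := by
  have hm : MeasurableSet S := (Set.to_countable S).measurableSet
  rw [TW, withDensity_apply _ hm, ← lintegral_indicator hm, lintegral_count]

def dcube {d : ℕ} (j : ℕ) (m : Idx d) : Set (Euc d) :=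
  {x | ∀ i, (m i : ℝ) * (2:ℝ) ^ (-(j:ℤ)) ≤ x i ∧ x i ≤ ((m i : ℝ) + 1) * (2:ℝ) ^ (-(j:ℤ))}

theorem dcube_isDyadic {d : ℕ} (j : ℕ) (m : Idx d) :
    IsDyadicCube (dcube j m) ((2:ℝ) ^ (-(j:ℤ))) :=
  ⟨j, fun i => m i, rfl, by simp [dcube]⟩

theorem mem_dcube {d : ℕ} (j : ℕ) {x : Euc d} (hx : x ∈ unitCube d) : x ∈ dcube j (ccode j x) := by
  intro i
  obtain ⟨h1, h2⟩ := ccode_bounds j hx i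
  have hp : (0:ℝ) < 2 ^ j := by positivity
  rw [zpow_neg, zpow_natCast, ← div_eq_mul_inv, ← div_eq_mul_inv, div_le_iff₀ hp, le_div_iff₀ hp]
  constructor <;> linarith

theorem side_rpow (j : ℕ) (s : ℝ) : ((2:ℝ) ^ (-(j:ℤ))) ^ s = (2:ℝ) ^ (-(j * s)) := by
  rw [← Real.rpow_intCast, ← Real.rpow_mul (by norm_num)]
  congr 1; push_cast; ring

theorem content_le {d : ℕ} {s s₀ : ℝ} (hs0 : 0 < s) (hs : s₀ ≤ s) {E : Set (Euc d)}
    (hE : E ⊆ unitCube d) : dyadicContent s E ≤ TC ccode (wt s₀) E := by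
  classical
  refine le_iInf₂ fun S hS => ?_
  refine ENNReal.le_of_forall_pos_le_add fun ε hε _ => ?_
  obtain ⟨e⟩ := nonempty_denumerable (ℕ × Idx d)
  let e : ℕ ≃ ℕ × Idx d := (Denumerable.eqv _).symm
  obtain ⟨δ, hδ, hδsum⟩ := ENNReal.exists_pos_sum_of_countable
    (ε := (ε : ℝ≥0∞)) (by simpa using hε.ne') (ℕ × Idx d)
  have hN : ∀ p, ∃ N : ℕ, (2:ℝ) ^ (-(N * s)) ≤ δ p := by
    intro p
    have h1 : Tendsto (fun N : ℕ => ((2:ℝ) ^ (-s)) ^ N) atTop (𝓝 0) :=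
      tendsto_pow_atTop_nhds_zero_of_lt_one (by positivity)
        (Real.rpow_lt_one_of_one_lt_of_neg (by norm_num) (by linarith))
    obtain ⟨N, hN⟩ := (h1.eventually (gt_mem_nhds (show (0:ℝ) < δ p from hδ p))).exists
    refine ⟨N, ?_⟩
    rw [← Real.rpow_natCast, ← Real.rpow_mul (by norm_num)] at hN
    refine le_of_eq_of_le ?_ hN.le
    congr 1; ring
  choose N hN using hN
  let lv : ℕ × Idx d → ℕ := fun p => if p ∈ S then p.1 else N p
  have hcost : ∀ p, ENNReal.ofReal (((2:ℝ) ^ (-(lv p:ℤ))) ^ s) ≤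
      S.indicator (fun p => wt s₀ p.1) p + δ p := by
    intro p
    rw [side_rpow]
    by_cases hp : p ∈ S
    · simp only [lv, hp, if_true, indicator_of_mem]
      refine le_trans ?_ le_self_add
      apply ENNReal.ofReal_le_ofReal
      apply Real.rpow_le_rpow_of_exponent_le (by norm_num)
      have : (0:ℝ) ≤ p.1 := by positivity
      nlinarith
    · simp only [lv, hp, if_false, indicator_of_notMem, not_false_eq_true, zero_add]
      refine (ENNReal.ofReal_le_ofReal (hN p)).trans ?_
      simp
  have hle : dyadicContent s E ≤ ∑' i, ENNReal.ofReal (((2:ℝ) ^ (-(lv (e i):ℤ))) ^ s) := by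
    refine iInf₂_le_of_le (fun i => dcube (lv (e i)) (e i).2) (fun i => (2:ℝ) ^ (-(lv (e i):ℤ))) ?_
    refine iInf₂_le_of_le (fun i => dcube_isDyadic _ _) ?_ le_rfl
    intro x hx
    obtain ⟨j, hj⟩ := hS x hx
    refine mem_iUnion.2 ⟨e.symm (j, ccode j x), ?_⟩
    simp only [Equiv.apply_symm_apply, lv, hj, if_true]
    exact mem_dcube j (hE hx)
  refine hle.trans ?_
  rw [e.tsum_eq (fun p => ENNReal.ofReal (((2:ℝ) ^ (-(lv p:ℤ))) ^ s))]
  refine (ENNReal.tsum_le_tsum hcost).trans ?_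
  rw [ENNReal.tsum_add, TW_eq_tsum]
  gcongr

theorem cpar_mem {d : ℕ} {j : ℕ} {c : Idx d} (hc : c ∈ BB d (j+1)) : cpar c ∈ BB d j := by
  simp only [BB, Fintype.mem_piFinset, Finset.mem_range, cpar] at *
  intro i
  have := hc i
  rw [pow_succ] at this
  omega

theorem masses {d : ℕ} {h : ℕ → Idx d → ℝ} (h0 : ∀ j q, 0 ≤ h j q)
    (hsub : ∀ j q, h j q ≤ ∑ c ∈ BB d (j+1) with cpar c = q, h (j+1) c) {k : ℕ} {κ : ℝ} (hκ : 0 ≤ κ)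
    {m0 : Idx d → ℝ} (hm0 : ∀ q, 0 ≤ m0 q) (hm0' : ∀ q, m0 q ≤ κ * h k q) (n : ℕ) :
    ∃ m : Idx d → ℝ, (∀ c, 0 ≤ m c) ∧ (∀ c, m c ≤ κ * h (k+n) c) ∧
      (∀ j ≤ n, ∀ q, ∑ c ∈ BB d (k+n) with cpar^[n-j] c = q, m c ≤ κ * h (k+j) q) ∧
      (∀ q ∈ BB d k, ∑ c ∈ BB d (k+n) with cpar^[n] c = q, m c = m0 q) := by
  induction n with
  | zero =>
    refine ⟨m0, hm0, hm0', ?_, ?_⟩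
    · intro j hj q
      obtain rfl : j = 0 := by omega
      change ∑ c ∈ BB d k with c = q, m0 c ≤ κ * h k q
      rw [Finset.sum_filter, Finset.sum_ite_eq' (BB d k) q m0]
      split_ifs
      · exact hm0' q
      · exact mul_nonneg hκ (h0 _ _)
    · intro q hq
      change ∑ c ∈ BB d k with c = q, m0 c = m0 q
      rw [Finset.sum_filter, Finset.sum_ite_eq' (BB d k) q m0, if_pos hq]
  | succ n ih =>
    obtain ⟨m, hmp, hmle, hmj, hmk⟩ := ih
    set J := k + n with hJ
    let σ : Idx d → ℝ := fun b => ∑ c ∈ BB d (J+1) with cpar c = b, h (J+1) c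
    have hσ0 : ∀ b, 0 ≤ σ b := fun b => Finset.sum_nonneg fun c _ => h0 _ _
    let m' : Idx d → ℝ := fun c => m (cpar c) * h (J+1) c / σ (cpar c)
    have hm'p : ∀ c, 0 ≤ m' c := fun c =>
      div_nonneg (mul_nonneg (hmp _) (h0 _ _)) (hσ0 _)
    have hm'le : ∀ c, m' c ≤ κ * h (J+1) c := by
      intro c
      rcases (hσ0 (cpar c)).eq_or_lt with h | h
      · simp only [m', ← h, div_zero]; exact mul_nonneg hκ (h0 _ _)
      · simp only [m']
        rw [div_le_iff₀ h]
        have h1 : m (cpar c) ≤ κ * σ (cpar c) :=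
          (hmle _).trans (mul_le_mul_of_nonneg_left (hsub _ _) hκ)
        nlinarith [mul_le_mul_of_nonneg_right h1 (h0 (J+1) c)]
    have hfib : ∀ b, ∑ c ∈ BB d (J+1) with cpar c = b, m' c = m b := by
      intro b
      have e1 : ∑ c ∈ BB d (J+1) with cpar c = b, m' c
          = ∑ c ∈ BB d (J+1) with cpar c = b, m b / σ b * h (J+1) c := by
        refine Finset.sum_congr rfl fun c hc => ?_
        have := (Finset.mem_filter.1 hc).2
        simp only [m', this]; ring
      rw [e1, ← Finset.mul_sum]
      change m b / σ b * σ b = m b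
      by_cases hz : σ b = 0
      · have h1 : m b ≤ κ * σ b := (hmle _).trans (mul_le_mul_of_nonneg_left (hsub _ _) hκ)
        rw [hz, mul_zero] at h1
        rw [hz, mul_zero]; exact le_antisymm (hmp b) h1
      · field_simp
    have hsum : ∀ i q, ∑ c ∈ BB d (J+1) with cpar^[i+1] c = q, m' c
        = ∑ b ∈ BB d J with cpar^[i] b = q, m b := by
      intro i q
      rw [← Finset.sum_fiberwise_of_maps_to (g := cpar)
        (t := (BB d J).filter fun b => cpar^[i] b = q)]
      · refine Finset.sum_congr rfl fun b hb => ?_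
        rw [← hfib b, Finset.filter_filter]
        refine Finset.sum_congr ?_ fun _ _ => rfl
        ext c
        rw [Finset.mem_filter, Finset.mem_filter, Function.iterate_succ_apply]
        have hb2 := (Finset.mem_filter.1 hb).2
        constructor
        · rintro ⟨h1, _, h3⟩; exact ⟨h1, h3⟩
        · rintro ⟨h1, h3⟩; exact ⟨h1, by rw [h3, hb2], h3⟩
      · intro c hc
        obtain ⟨h1, h2⟩ := Finset.mem_filter.1 hc
        exact Finset.mem_filter.2 ⟨cpar_mem h1, by rwa [Function.iterate_succ_apply] at h2⟩
    refine ⟨m', hm'p, hm'le, ?_, ?_⟩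
    · intro j hj q
      rcases Nat.lt_or_ge n j with hj' | hj'
      · obtain rfl : j = n + 1 := by omega
        rw [Nat.sub_self]
        change ∑ c ∈ BB d (J+1) with c = q, m' c ≤ κ * h (J+1) q
        rw [Finset.sum_filter, Finset.sum_ite_eq' (BB d (J+1)) q m']
        split_ifs
        · exact hm'le q
        · exact mul_nonneg hκ (h0 _ _)
      · have : n + 1 - j = (n - j) + 1 := by omega
        rw [this]
        change ∑ c ∈ BB d (J+1) with _, m' c ≤ _
        rw [hsum]; exact hmj j hj' q
    · intro q hq
      change ∑ c ∈ BB d (J+1) with _, m' c = _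
      rw [hsum]; exact hmk q hq

def hh {d : ℕ} (s : ℝ) (V : Set (Euc d)) (j : ℕ) (q : Idx d) : ℝ :=
  (TC ccode (wt s) (V ∩ {x | ccode j x = q})).toReal

theorem hh_nonneg {d : ℕ} (s : ℝ) (V : Set (Euc d)) (j : ℕ) (q : Idx d) : 0 ≤ hh s V j q :=
  ENNReal.toReal_nonneg

theorem hh_le {d : ℕ} (s : ℝ) (V : Set (Euc d)) (j : ℕ) (q : Idx d) :
    hh s V j q ≤ (2:ℝ) ^ (-(j * s)) := by
  have := ENNReal.toReal_mono (wt_ne_top s j) (TC_cell_le (wt s) V j q)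
  rwa [wt, ENNReal.toReal_ofReal (by positivity)] at this

theorem hh_sub {d : ℕ} (s : ℝ) (V : Set (Euc d)) (j : ℕ) (q : Idx d) :
    hh s V j q ≤ ∑ c ∈ BB d (j+1) with cpar c = q, hh s V (j+1) c := by
  have h : TC ccode (wt s) (V ∩ {x | ccode j x = q}) ≤
      ∑ c ∈ BB d (j+1) with cpar c = q, TC ccode (wt s) (V ∩ {x | ccode (j+1) x = c}) := by
    refine le_trans (TC_mono ?_) (TC_biUnion _ _)
    rintro x ⟨hx, hq⟩
    refine mem_iUnion₂.2 ⟨ccode (j+1) x, ?_, hx, rfl⟩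
    refine Finset.mem_filter.2 ⟨ccode_mem _ _, ?_⟩
    rw [← ccode_par]; exact hq
  have := ENNReal.toReal_mono (ENNReal.sum_ne_top.2 fun c _ => TC_ne_top s _) h
  rwa [ENNReal.toReal_sum fun c _ => TC_ne_top s _] at this

theorem hh_total {d : ℕ} (s : ℝ) (V : Set (Euc d)) (j : ℕ) :
    (TC ccode (wt s) V).toReal ≤ ∑ c ∈ BB d j, hh s V j c := by
  have h : TC ccode (wt s) V ≤
      ∑ c ∈ BB d j, TC ccode (wt s) (V ∩ {x | ccode j x = c}) := by
    refine le_trans (TC_mono ?_) (TC_biUnion _ _)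
    intro x hx
    exact mem_iUnion₂.2 ⟨ccode j x, ccode_mem _ _, hx, rfl⟩
  have := ENNReal.toReal_mono (ENNReal.sum_ne_top.2 fun c _ => TC_ne_top s _) h
  rwa [ENNReal.toReal_sum fun c _ => TC_ne_top s _] at this

theorem exists_point {d : ℕ} {s : ℝ} {V : Set (Euc d)} {j : ℕ} {q : Idx d} (h : 0 < hh s V j q) :
    ∃ x ∈ V, ccode j x = q := by
  by_contra! hcon
  have : V ∩ {x | ccode j x = q} = ∅ := by
    ext x; simp only [mem_inter_iff, mem_empty_iff_false, iff_false]
    rintro ⟨h1, h2⟩; exact hcon x h1 h2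
  rw [hh, this, TC_empty] at h
  simp at h

/-- The finite measure. -/
theorem exists_measure {d : ℕ} {ε ρ : ℝ} (hρ : 0 < ρ) (hρ1 : ρ < 1) (k n : ℕ) (hε : 0 ≤ ε)
    (hk : (1 - ρ) * (2:ℝ) ^ (k * ε) ≤ 1)
    {V : Set (Euc d)} (hV : ENNReal.ofReal (1 - ρ) < TC ccode (wt (d - ε)) V) :
    ∃ (F : Finset (Idx d)) (x : Idx d → Euc d) (m : Idx d → ℝ) (G : Finset (Idx d)),
      (∀ c ∈ F, x c ∈ V) ∧ (∀ c ∈ F, 0 ≤ m c) ∧ (∑ c ∈ F, m c ≤ 1) ∧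
      (∀ j, k ≤ j → j ≤ k + n → ∀ q, ∑ c ∈ F with ccode j (x c) = q, m c
        ≤ ρ⁻¹ * (2:ℝ) ^ (j * ε) / 2 ^ (j * d)) ∧
      G ⊆ BB d k ∧ ((1 - 3 * ρ) * 2 ^ (k * d) ≤ G.card) ∧
      (∀ q ∈ G, ∑ c ∈ F with ccode k (x c) = q, m c = 1 / 2 ^ (k * d)) := by
  classical
  set s : ℝ := d - ε with hs
  have hw : ∀ j : ℕ, (2:ℝ) ^ (-(j * s)) = (2:ℝ) ^ (j * ε) / 2 ^ (j * d) := by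
    intro j
    rw [← Real.rpow_natCast 2 (j * d), ← Real.rpow_sub (by norm_num)]
    congr 1; push_cast; rw [hs]; ring
  have hD : (0:ℝ) < 2 ^ (k * d) := by positivity
  let G := (BB d k).filter fun q => ρ * (2:ℝ) ^ (-(k * s)) ≤ hh s V k q
  have hGB : G ⊆ BB d k := Finset.filter_subset _ _
  let m0 : Idx d → ℝ := fun q => if q ∈ G then 1 / 2 ^ (k * d) else 0
  let κ : ℝ := 1 / 2 ^ (k * d) / (ρ * (2:ℝ) ^ (-(k * s)))
  have hκ : 0 ≤ κ := by positivity
  have hκ' : κ ≤ ρ⁻¹ := by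
    simp only [κ]
    rw [hw]
    have h1 : (1:ℝ) ≤ (2:ℝ) ^ (k * ε) := Real.one_le_rpow (by norm_num) (by positivity)
    have : 1 / 2 ^ (k * d) / (ρ * ((2:ℝ) ^ (k * ε) / 2 ^ (k * d))) = ρ⁻¹ * ((2:ℝ) ^ (k * ε))⁻¹ := by
      field_simp
    rw [this]
    exact mul_le_of_le_one_right (by positivity) (inv_le_one_of_one_le₀ h1)
  have hm0 : ∀ q, 0 ≤ m0 q := by
    intro q; simp only [m0]; split_ifs <;> positivity
  have hm0' : ∀ q, m0 q ≤ κ * hh s V k q := by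
    intro q; simp only [m0]; split_ifs with hq
    · have h1 := (Finset.mem_filter.1 hq).2
      simp only [κ]
      rw [div_mul_eq_mul_div, le_div_iff₀ (by positivity)]
      exact mul_le_mul_of_nonneg_left h1 (by positivity)
    · exact mul_nonneg hκ (hh_nonneg _ _ _ _)
  obtain ⟨m, hmp, hmle, hmj, hmk⟩ := masses (hh_nonneg s V) (hh_sub s V) hκ hm0 hm0' n
  have hpt : ∀ c, ∃ y : Euc d, 0 < m c → y ∈ V ∧ ccode (k+n) y = c := by
    intro c
    by_cases hc : 0 < m c
    · have : 0 < hh s V (k+n) c := by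
        have h1 := hc.trans_le (hmle c)
        exact pos_of_mul_pos_right h1 hκ
      obtain ⟨y, h1, h2⟩ := exists_point this
      exact ⟨y, fun _ => ⟨h1, h2⟩⟩
    · exact ⟨0, fun h => absurd h hc⟩
  choose x hx using hpt
  let F := (BB d (k+n)).filter fun c => 0 < m c
  have hFsum : ∀ j ≤ n, ∀ q, ∑ c ∈ F with ccode (k+j) (x c) = q, m c
      = ∑ c ∈ BB d (k+n) with cpar^[n-j] c = q, m c := by
    intro j hj q
    rw [Finset.filter_filter]
    apply Finset.sum_subset_zero_on_sdiff
    · intro c hc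
      obtain ⟨h1, h2, h3⟩ := Finset.mem_filter.1 hc
      refine Finset.mem_filter.2 ⟨h1, ?_⟩
      have := code_anc (code := ccode) (par := cpar) ccode_par (x c) (k+j) (n-j)
      rw [show k + j + (n - j) = k + n by omega, (hx c h2).2, h3] at this
      exact this
    · intro c hc
      obtain ⟨h1, h2⟩ := Finset.mem_sdiff.1 hc
      obtain ⟨h3, h4⟩ := Finset.mem_filter.1 h1
      by_contra hne
      have hpos : 0 < m c := lt_of_le_of_ne (hmp c) (Ne.symm hne)
      apply h2
      refine Finset.mem_filter.2 ⟨h3, hpos, ?_⟩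
      have := code_anc (code := ccode) (par := cpar) ccode_par (x c) (k+j) (n-j)
      rw [show k + j + (n - j) = k + n by omega, (hx c hpos).2, h4] at this
      exact this.symm
    · intro _ _; rfl
  have hFk : ∀ q ∈ BB d k, ∑ c ∈ F with ccode k (x c) = q, m c = m0 q := by
    intro q hq
    have := hFsum 0 (Nat.zero_le _) q
    simp only [Nat.add_zero, Nat.sub_zero] at this
    rw [this]; exact hmk q hq
  refine ⟨F, x, m, G, ?_, ?_, ?_, ?_, hGB, ?_, ?_⟩
  · intro c hc; exact (hx c (Finset.mem_filter.1 hc).2).1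
  · intro c _; exact hmp c
  · rw [← Finset.sum_fiberwise_of_maps_to (g := fun c => ccode k (x c)) (t := BB d k)
      (fun c _ => ccode_mem _ _)]
    rw [Finset.sum_congr rfl hFk]
    calc ∑ q ∈ BB d k, m0 q ≤ ∑ q ∈ BB d k, (1:ℝ) / 2 ^ (k * d) := by
          apply Finset.sum_le_sum; intro q _; simp only [m0]; split_ifs
          · exact le_rfl
          · positivity
      _ = 1 := by rw [Finset.sum_const, card_BB, nsmul_eq_mul]; push_cast; field_simp
  · intro j hj1 hj2 q
    obtain ⟨i, rfl⟩ := Nat.exists_eq_add_of_le hj1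
    rw [hFsum i (by omega) q]
    refine (hmj i (by omega) q).trans ?_
    rw [mul_div_assoc, ← hw]
    exact mul_le_mul hκ' (hh_le _ _ _ _) (hh_nonneg _ _ _ _) (by positivity)
  · have h1 := hh_total s V k
    have h2 : 1 - ρ < (TC ccode (wt s) V).toReal := by
      rwa [← ENNReal.ofReal_lt_iff_lt_toReal (by linarith) (TC_ne_top s V)]
    have h3 : ∑ c ∈ BB d k, hh s V k c ≤
        ∑ c ∈ BB d k, ((if c ∈ G then (2:ℝ) ^ (-(k * s)) else 0) + ρ * (2:ℝ) ^ (-(k * s))) := by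
      apply Finset.sum_le_sum
      intro c hc
      split_ifs with hcG
      · have := hh_le s V k c
        have h5 : 0 ≤ ρ * (2:ℝ) ^ (-(k * s)) := by positivity
        linarith
      · have : ¬ ρ * (2:ℝ) ^ (-(k * s)) ≤ hh s V k c := fun h => hcG (Finset.mem_filter.2 ⟨hc, h⟩)
        linarith
    rw [Finset.sum_add_distrib, Finset.sum_const, card_BB, ← Finset.sum_filter,
      Finset.filter_mem_eq_inter, Finset.inter_eq_right.2 hGB, Finset.sum_const, hw] at h3
    simp only [nsmul_eq_mul] at h3
    push_cast at h3
    have h4 : 1 - ρ < ((G.card:ℝ) + ρ * 2 ^ (k * d)) * ((2:ℝ) ^ (k * ε) / 2 ^ (k * d)) := by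
      refine (h2.trans_le (h1.trans h3)).trans_eq ?_
      ring
    rw [← mul_div_assoc, lt_div_iff₀ hD] at h4
    have h5 : 0 ≤ (G.card:ℝ) + ρ * 2 ^ (k * d) := by positivity
    have h6 : (1 - ρ) * ((1 - ρ) * 2 ^ (k * d)) ≤ (G.card:ℝ) + ρ * 2 ^ (k * d) := by
      have h7 := mul_le_mul_of_nonneg_left h4.le (show 0 ≤ 1 - ρ by linarith)
      refine h7.trans ?_
      calc _ = ((G.card:ℝ) + ρ * 2 ^ (k * d)) * ((1 - ρ) * (2:ℝ) ^ (k * ε)) := by ring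
        _ ≤ _ := mul_le_of_le_one_right h5 hk
    nlinarith [sq_nonneg ρ, mul_nonneg (sq_nonneg ρ) hD.le]
  · intro q hq
    rw [hFk q (hGB hq)]
    simp only [m0, hq, if_true]

theorem osc_quarter {r κ : ℝ} (hr : r ≠ 0) (hκ : 0 < κ) (hκ2 : κ ≤ Real.pi / 2) :
    ‖∫ α in κ..(Real.pi / 2), Complex.exp ((r * Real.cos α : ℝ) * Complex.I)‖ ≤ Real.pi / (|r| * κ) := by
  have hpi := Real.pi_pos
  have hsin : ∀ α ∈ uIcc κ (Real.pi / 2), 0 < Real.sin α := by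
    intro α hα
    rw [uIcc_of_le hκ2] at hα
    exact Real.sin_pos_of_pos_of_lt_pi (hκ.trans_le hα.1) (by linarith [hα.2])
  let u : ℝ → ℂ := fun α => (((Real.sin α)⁻¹ : ℝ) : ℂ)
  let u' : ℝ → ℂ := fun α => ((-Real.cos α / Real.sin α ^ 2 : ℝ) : ℂ)
  let v : ℝ → ℂ := fun α => Complex.exp ((r * Real.cos α : ℝ) * Complex.I)
  let v' : ℝ → ℂ := fun α => Complex.exp ((r * Real.cos α : ℝ) * Complex.I) *
    (((r * -Real.sin α : ℝ) : ℂ) * Complex.I)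
  have hur : ∀ α ∈ uIcc κ (Real.pi / 2), HasDerivAt (fun α => (Real.sin α)⁻¹)
      (-Real.cos α / Real.sin α ^ 2) α := fun α hα =>
    (Real.hasDerivAt_sin α).inv (hsin α hα).ne'
  have hu : ∀ α ∈ uIcc κ (Real.pi / 2), HasDerivAt u (u' α) α := fun α hα =>
    (hur α hα).ofReal_comp
  have hv : ∀ α ∈ uIcc κ (Real.pi / 2), HasDerivAt v (v' α) α := by
    intro α _
    have h1 : HasDerivAt (fun α => r * Real.cos α) (r * -Real.sin α) α :=
      (Real.hasDerivAt_cos α).const_mul r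
    exact (h1.ofReal_comp.mul_const Complex.I).cexp
  have hu'cr : ContinuousOn (fun α => -Real.cos α / Real.sin α ^ 2) (uIcc κ (Real.pi / 2)) :=
    ContinuousOn.div (by fun_prop) (by fun_prop) fun α hα => pow_ne_zero _ (hsin α hα).ne'
  have hu'i : IntervalIntegrable u' volume κ (Real.pi / 2) :=
    (Complex.continuous_ofReal.comp_continuousOn hu'cr).intervalIntegrable
  have hv'i : IntervalIntegrable v' volume κ (Real.pi / 2) := by
    apply Continuous.intervalIntegrable; fun_prop
  have key := intervalIntegral.integral_mul_deriv_eq_deriv_mul hu hv hu'i hv'i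
  have hnv : ∀ α, ‖v α‖ = 1 := fun α => Complex.norm_exp_ofReal_mul_I _
  have e1 : ∫ α in κ..(Real.pi / 2), u α * v' α = (-(r:ℂ) * Complex.I) * ∫ α in κ..(Real.pi / 2), v α := by
    rw [← intervalIntegral.integral_const_mul]
    apply intervalIntegral.integral_congr
    intro α hα
    have : ((Real.sin α : ℝ) : ℂ) ≠ 0 := by exact_mod_cast (hsin α hα).ne'
    simp only [u, v, v']
    push_cast at this ⊢
    field_simp
  have hu'int : ‖∫ α in κ..(Real.pi / 2), u' α * v α‖ ≤ (Real.sin κ)⁻¹ - 1 := by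
    have h2 : ∫ α in κ..(Real.pi / 2), (Real.cos α / Real.sin α ^ 2) = (Real.sin κ)⁻¹ - 1 := by
      have := intervalIntegral.integral_eq_sub_of_hasDerivAt hur hu'cr.intervalIntegrable
      rw [Real.sin_pi_div_two, inv_one] at this
      have h3 : ∫ α in κ..(Real.pi / 2), (Real.cos α / Real.sin α ^ 2) =
        - ∫ α in κ..(Real.pi / 2), (-Real.cos α / Real.sin α ^ 2) := by
        rw [← intervalIntegral.integral_neg]; congr 1; funext α; ring
      rw [h3, this]; ring
    rw [← h2]
    apply intervalIntegral.norm_integral_le_of_norm_le hκ2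
    · refine Eventually.of_forall fun α hα => ?_
      rw [norm_mul, hnv, mul_one]
      simp only [u', Complex.norm_real]
      rw [Real.norm_eq_abs, abs_div, abs_neg, abs_of_nonneg, abs_of_nonneg (sq_nonneg _)]
      exact Real.cos_nonneg_of_neg_pi_div_two_le_of_le (by linarith [hα.1]) hα.2
    · have : (fun α => Real.cos α / Real.sin α ^ 2) = fun α => -(-Real.cos α / Real.sin α ^ 2) := by
        funext α; ring
      rw [this]
      exact hu'cr.neg.intervalIntegrable
  have hsκ : 2 / Real.pi * κ ≤ Real.sin κ := Real.mul_le_sin hκ.le hκ2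
  have hsκ0 : 0 < Real.sin κ := hsin κ left_mem_uIcc
  have hbound : |r| * ‖∫ α in κ..(Real.pi / 2), v α‖ ≤ 2 * (Real.sin κ)⁻¹ := by
    have h5 : ‖(-(r:ℂ) * Complex.I) * ∫ α in κ..(Real.pi / 2), v α‖
        = |r| * ‖∫ α in κ..(Real.pi / 2), v α‖ := by simp
    rw [← h5, ← e1, key]
    refine (norm_sub_le _ _).trans ?_
    have h6 : ‖u (Real.pi / 2) * v (Real.pi / 2) - u κ * v κ‖ ≤ 1 + (Real.sin κ)⁻¹ := by
      refine (norm_sub_le _ _).trans ?_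
      rw [norm_mul, norm_mul, hnv, hnv]
      simp only [u, Complex.norm_real, Real.sin_pi_div_two, Real.norm_eq_abs, mul_one]
      rw [abs_of_pos (inv_pos.2 hsκ0)]; simp
    linarith
  have hinv : (Real.sin κ)⁻¹ ≤ Real.pi / (2 * κ) := by
    rw [inv_le_comm₀ hsκ0 (by positivity), inv_div]
    calc 2 * κ / Real.pi = 2 / Real.pi * κ := by ring
      _ ≤ _ := hsκ
  have hr' : 0 < |r| := abs_pos.2 hr
  change ‖∫ α in κ..(Real.pi / 2), v α‖ ≤ _
  rw [le_div_iff₀ (by positivity)]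
  have : 2 * (Real.sin κ)⁻¹ * κ ≤ Real.pi := by
    calc 2 * (Real.sin κ)⁻¹ * κ ≤ 2 * (Real.pi / (2 * κ)) * κ := by gcongr
      _ = Real.pi := by field_simp
  nlinarith

theorem osc_quarter' (r : ℝ) :
    ‖∫ α in (0:ℝ)..(Real.pi / 2), Complex.exp ((r * Real.cos α : ℝ) * Complex.I)‖ * √|r| ≤ 5 := by
  have hpi := Real.pi_pos
  have hpi4 := Real.pi_lt_four
  have hpi3 := Real.pi_gt_three
  have hcont : Continuous fun α : ℝ => Complex.exp ((r * Real.cos α : ℝ) * Complex.I) := by fun_prop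
  have triv : ∀ a b : ℝ, a ≤ b → ‖∫ α in a..b, Complex.exp ((r * Real.cos α : ℝ) * Complex.I)‖ ≤ b - a := by
    intro a b hab
    have := intervalIntegral.norm_integral_le_of_norm_le_const (a := a) (b := b) (C := 1)
      (f := fun α : ℝ => Complex.exp ((r * Real.cos α : ℝ) * Complex.I))
      (fun α _ => (Complex.norm_exp_ofReal_mul_I _).le)
    rwa [one_mul, abs_of_nonneg (by linarith)] at this
  rcases le_or_gt |r| 1 with h | h
  · have h1 : √|r| ≤ 1 := Real.sqrt_le_one.2 h
    have h2 := triv 0 (Real.pi / 2) (by positivity)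
    nlinarith [Real.sqrt_nonneg |r|, norm_nonneg (∫ α in (0:ℝ)..(Real.pi / 2), Complex.exp ((r * Real.cos α : ℝ) * Complex.I))]
  · have hr : r ≠ 0 := by rintro rfl; simp at h; linarith
    set q := √|r| with hq
    have hqq : q * q = |r| := Real.mul_self_sqrt (abs_nonneg r)
    have hq1 : 1 ≤ q := Real.one_le_sqrt.2 h.le
    have hq0 : 0 < q := by linarith
    have hκ : q⁻¹ ≤ Real.pi / 2 := (inv_le_one_of_one_le₀ hq1).trans (by linarith)
    have h1 := osc_quarter hr (inv_pos.2 hq0) hκ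
    have h2 := triv 0 q⁻¹ (by positivity)
    rw [← intervalIntegral.integral_add_adjacent_intervals (hcont.intervalIntegrable 0 q⁻¹)
      (hcont.intervalIntegrable _ _)]
    have h3 := (norm_add_le _ _).trans (add_le_add h2 h1)
    refine (mul_le_mul_of_nonneg_right h3 hq0.le).trans ?_
    rw [← hqq]
    have : (q⁻¹ - 0 + Real.pi / (q * q * q⁻¹)) * q = 1 + Real.pi := by field_simp; ring
    linarith

theorem osc_circle (r : ℝ) :
    ‖∫ α in (0:ℝ)..(2 * Real.pi), Complex.exp ((r * Real.cos α : ℝ) * Complex.I)‖ * √|r| ≤ 20 := by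
  have hcont : ∀ r : ℝ, Continuous fun α : ℝ => Complex.exp ((r * Real.cos α : ℝ) * Complex.I) := by
    intro r; fun_prop
  have half : ∀ r : ℝ, ‖∫ α in (0:ℝ)..Real.pi, Complex.exp ((r * Real.cos α : ℝ) * Complex.I)‖ * √|r| ≤ 10 := by
    intro r
    rw [← intervalIntegral.integral_add_adjacent_intervals
      ((hcont r).intervalIntegrable 0 (Real.pi / 2)) ((hcont r).intervalIntegrable _ _)]
    have e : ∫ α in (Real.pi / 2)..Real.pi, Complex.exp ((r * Real.cos α : ℝ) * Complex.I)
        = ∫ α in (0:ℝ)..(Real.pi / 2), Complex.exp (((-r) * Real.cos α : ℝ) * Complex.I) := by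
      have := intervalIntegral.integral_comp_sub_left (a := Real.pi / 2) (b := Real.pi)
        (fun α : ℝ => Complex.exp (((-r) * Real.cos α : ℝ) * Complex.I)) Real.pi
      rw [sub_self, show Real.pi - Real.pi / 2 = Real.pi / 2 by ring] at this
      rw [← this]
      congr 1; funext α; rw [Real.cos_pi_sub]; congr 3; ring
    rw [e]
    have h1 := osc_quarter' r
    have h2 := osc_quarter' (-r)
    rw [abs_neg] at h2
    refine (mul_le_mul_of_nonneg_right (norm_add_le _ _) (Real.sqrt_nonneg _)).trans ?_
    linarith
  rw [← intervalIntegral.integral_add_adjacent_intervals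
      ((hcont r).intervalIntegrable 0 Real.pi) ((hcont r).intervalIntegrable _ _)]
  have e : ∫ α in Real.pi..(2 * Real.pi), Complex.exp ((r * Real.cos α : ℝ) * Complex.I)
      = ∫ α in (0:ℝ)..Real.pi, Complex.exp (((-r) * Real.cos α : ℝ) * Complex.I) := by
    have := intervalIntegral.integral_comp_sub_right (a := Real.pi) (b := 2 * Real.pi)
      (fun α : ℝ => Complex.exp (((-r) * Real.cos α : ℝ) * Complex.I)) Real.pi
    rw [sub_self, show 2 * Real.pi - Real.pi = Real.pi by ring] at this
    rw [← this]
    congr 1; funext α; rw [Real.cos_sub_pi]; congr 3; ring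
  rw [e]
  have h1 := half r
  have h2 := half (-r)
  rw [abs_neg] at h2
  refine (mul_le_mul_of_nonneg_right (norm_add_le _ _) (Real.sqrt_nonneg _)).trans ?_
  linarith

theorem osc_ab (a b : ℝ) :
    ‖∫ α in (0:ℝ)..(2 * Real.pi), Complex.exp ((Real.cos α * a + Real.sin α * b : ℝ) * Complex.I)‖
      * √(√(a ^ 2 + b ^ 2)) ≤ 20 := by
  set z : ℂ := ⟨a, b⟩
  set r := ‖z‖ with hr
  have hz : √(a ^ 2 + b ^ 2) = r := by
    rw [hr, Complex.norm_def, Complex.normSq_apply]; congr 1; ring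
  have ha : a = r * Real.cos (Complex.arg z) := by rw [hr, Complex.norm_mul_cos_arg]
  have hb : b = r * Real.sin (Complex.arg z) := by rw [hr, Complex.norm_mul_sin_arg]
  have e : ∫ α in (0:ℝ)..(2 * Real.pi), Complex.exp ((Real.cos α * a + Real.sin α * b : ℝ) * Complex.I)
      = ∫ α in (0:ℝ)..(2 * Real.pi), Complex.exp ((r * Real.cos α : ℝ) * Complex.I) := by
    have h1 := intervalIntegral.integral_comp_sub_right (a := 0) (b := 2 * Real.pi)
      (fun α : ℝ => Complex.exp ((r * Real.cos α : ℝ) * Complex.I)) (Complex.arg z)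
    have hper : Function.Periodic (fun α : ℝ => Complex.exp ((r * Real.cos α : ℝ) * Complex.I))
        (2 * Real.pi) := by
      intro α; simp only [Real.cos_add_two_pi]
    have h2 := hper.intervalIntegral_add_eq (0 - Complex.arg z) 0
    rw [zero_add, show 0 - Complex.arg z + 2 * Real.pi = 2 * Real.pi - Complex.arg z by ring] at h2
    rw [← h2, ← h1]
    congr 1; funext α
    rw [Real.cos_sub]
    congr 3
    rw [show Real.cos α * a + Real.sin α * b = Real.cos α * (r * Real.cos (Complex.arg z))
      + Real.sin α * (r * Real.sin (Complex.arg z)) by rw [← ha, ← hb]]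
    ring
  rw [hz, e]
  have := osc_circle r
  rwa [abs_of_nonneg (norm_nonneg z)] at this

theorem cos_int_aux : IntervalIntegrable (fun α : ℝ => (√|Real.cos α|)⁻¹) volume 0 (2 * Real.pi) := by
  have hpi := Real.pi_pos
  have hm : Measurable (fun α : ℝ => (√|Real.cos α|)⁻¹) := by fun_prop
  have h1 : IntervalIntegrable (fun α : ℝ => (√|Real.cos α|)⁻¹) volume 0 (Real.pi / 2) := by
    have h0 : IntervalIntegrable (fun x : ℝ => x ^ (-(1/2) : ℝ)) volume 0 1 :=
      intervalIntegral.intervalIntegrable_rpow' (by norm_num)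
    have h0' := (h0.comp_mul_left (c := 2 / Real.pi)).comp_sub_left (Real.pi / 2)
    have h2 : IntervalIntegrable (fun x : ℝ => (2 / Real.pi * (Real.pi / 2 - x)) ^ (-(1/2) : ℝ)) volume
      0 (Real.pi / 2) := by
      have := h0'.symm
      simpa using this
    refine h2.mono_fun hm.aestronglyMeasurable ?_
    refine (ae_restrict_iff' measurableSet_uIoc).2 (Eventually.of_forall fun x hx => ?_)
    rw [uIoc_of_le (by positivity)] at hx
    have hx1 : 0 ≤ 2 / Real.pi * (Real.pi / 2 - x) := mul_nonneg (by positivity) (by linarith [hx.2])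
    have hc := Real.one_sub_mul_le_cos hx.1.le hx.2
    have hce : 1 - 2 / Real.pi * x = 2 / Real.pi * (Real.pi / 2 - x) := by field_simp
    beta_reduce
    rw [Real.rpow_neg hx1, ← Real.sqrt_eq_rpow, Real.norm_of_nonneg (by positivity), Real.norm_of_nonneg (by positivity)]
    rcases hx1.eq_or_lt with h | h
    · have : x = Real.pi / 2 := by
        have := h.symm
        simp only [mul_eq_zero, div_eq_zero_iff] at this
        rcases this with h | h
        · rcases h with h | h <;> linarith
        · linarith
      rw [this]; simp
    · apply inv_anti₀ (by positivity)
      apply Real.sqrt_le_sqrt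
      rw [hce] at hc
      exact hc.trans (le_abs_self _)
  have h2 : IntervalIntegrable (fun α : ℝ => (√|Real.cos α|)⁻¹) volume (-(Real.pi / 2)) 0 := by
    have := h1.symm.comp_sub_left 0
    simpa using this
  have h3 := h2.trans h1
  have hper : Function.Periodic (fun α : ℝ => (√|Real.cos α|)⁻¹) Real.pi := by
    intro α; simp [Real.cos_add_pi]
  exact hper.intervalIntegrable (t := -(Real.pi / 2)) hpi.ne' (by convert h3 using 1; ring) _ _

def UU : Measure ℝ := ENNReal.ofReal ((2 * Real.pi)⁻¹) • (volume.restrict (Ioc 0 (2 * Real.pi)))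

instance : IsProbabilityMeasure UU := by
  constructor
  have hpi := Real.pi_pos
  rw [UU, Measure.smul_apply, Measure.restrict_apply_univ, Real.volume_Ioc, smul_eq_mul,
    ← ENNReal.ofReal_mul (by positivity)]
  rw [sub_zero, inv_mul_cancel₀ (by positivity), ENNReal.ofReal_one]

theorem integral_UU {E : Type*} [NormedAddCommGroup E] [NormedSpace ℝ E] (f : ℝ → E) :
    ∫ α, f α ∂UU = (2 * Real.pi)⁻¹ • ∫ α in (0:ℝ)..(2 * Real.pi), f α := by
  have hpi := Real.pi_pos
  rw [UU, integral_smul_measure, ENNReal.toReal_ofReal (by positivity),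
    intervalIntegral.integral_of_le (by positivity)]

theorem cos_int_UU : Integrable (fun α : ℝ => (√|Real.cos α|)⁻¹) UU := by
  have h := cos_int_aux
  rw [intervalIntegrable_iff_integrableOn_Ioc_of_le (by positivity)] at h
  exact Integrable.smul_measure h ENNReal.ofReal_ne_top

theorem cos_ne_UU : ∀ᵐ α ∂UU, Real.cos α ≠ 0 := by
  have hac : UU ≪ volume :=
    Measure.AbsolutelyContinuous.trans (Measure.smul_absolutelyContinuous)
      Measure.restrict_le_self.absolutelyContinuous
  apply hac.ae_le
  have : {α : ℝ | ¬ Real.cos α ≠ 0} ⊆ range (fun k : ℤ => (2 * k + 1) * Real.pi / 2) := by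
    intro α h
    simp only [ne_eq, not_not, mem_setOf_eq] at h
    obtain ⟨k, hk⟩ := Real.cos_eq_zero_iff.1 h
    exact ⟨k, hk.symm⟩
  exact measure_mono_null this ((countable_range _).measure_zero _)

def cf {d : ℕ} (σ : Measure (Euc d)) (ξ : Euc d) : ℂ :=
  ∫ y, Complex.exp ((inner ℝ ξ y : ℝ) * Complex.I) ∂σ

def Tm {d : ℕ} (σ : Measure (Euc d)) (e : Euc d) : Measure (Euc d) :=
  (UU.prod σ).map (fun p => Real.cos p.1 • p.2 + Real.sin p.1 • e)

theorem Tm_meas {d : ℕ} (e : Euc d) :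
    Measurable (fun p : ℝ × Euc d => Real.cos p.1 • p.2 + Real.sin p.1 • e) := by
  fun_prop

instance {d : ℕ} (σ : Measure (Euc d)) [IsProbabilityMeasure σ] (e : Euc d) :
    IsProbabilityMeasure (Tm σ e) :=
  Measure.isProbabilityMeasure_map (Tm_meas e).aemeasurable

theorem cf_Tm_int {d : ℕ} (σ : Measure (Euc d)) [IsProbabilityMeasure σ] (e ξ : Euc d) :
    Integrable (fun p : ℝ × Euc d => Complex.exp ((Real.cos p.1 * inner ℝ ξ p.2 +
      Real.sin p.1 * inner ℝ ξ e : ℝ) * Complex.I)) (UU.prod σ) := by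
  refine Integrable.of_bound (C := 1) (by fun_prop) (Eventually.of_forall fun p => ?_)
  rw [Complex.norm_exp_ofReal_mul_I]

theorem cf_Tm {d : ℕ} (σ : Measure (Euc d)) [IsProbabilityMeasure σ] (e ξ : Euc d) :
    cf (Tm σ e) ξ = ∫ p : ℝ × Euc d, Complex.exp ((Real.cos p.1 * inner ℝ ξ p.2 +
      Real.sin p.1 * inner ℝ ξ e : ℝ) * Complex.I) ∂(UU.prod σ) := by
  rw [cf, Tm, integral_map (Tm_meas e).aemeasurable (by fun_prop)]
  simp only [inner_add_right, inner_smul_right]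

theorem cf_Tm_bound1 {d : ℕ} (σ : Measure (Euc d)) [IsProbabilityMeasure σ] (e ξ : Euc d) {w : ℝ}
    (hw0 : 0 ≤ w) (hw : ∀ᵐ y ∂σ, w ≤ √(√((inner ℝ ξ y : ℝ) ^ 2 + (inner ℝ ξ e : ℝ) ^ 2))) :
    ‖cf (Tm σ e) ξ‖ * w ≤ 20 := by
  rcases hw0.eq_or_lt with h | h
  · rw [← h]; norm_num
  have hpi := Real.pi_gt_three
  rw [cf_Tm, integral_prod_symm _ (cf_Tm_int σ e ξ), ← le_div_iff₀ h]
  have : ∀ᵐ y ∂σ, ‖∫ α, Complex.exp ((Real.cos α * inner ℝ ξ y +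
      Real.sin α * inner ℝ ξ e : ℝ) * Complex.I) ∂UU‖ ≤ 20 / w := by
    filter_upwards [hw] with y hy
    rw [integral_UU, norm_smul, le_div_iff₀ h, Real.norm_of_nonneg (by positivity)]
    have h1 := osc_ab (inner ℝ ξ y) (inner ℝ ξ e)
    have h2 : (2 * Real.pi)⁻¹ ≤ 1 := inv_le_one_of_one_le₀ (by linarith)
    refine le_trans ?_ h1
    rw [mul_assoc]
    calc _ ≤ 1 * _ := mul_le_mul_of_nonneg_right h2 (by positivity)
      _ ≤ _ := by rw [one_mul]; exact mul_le_mul_of_nonneg_left hy (norm_nonneg _)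
  calc _ ≤ (20 / w) * σ.real univ := norm_integral_le_of_norm_le_const this
    _ = _ := by simp

theorem cf_Tm_bound2 {d : ℕ} (σ : Measure (Euc d)) [IsProbabilityMeasure σ] (e : Euc d) {C : ℝ}
    (i : Fin d) (hC : ∀ ξ, ‖cf σ ξ‖ * √|ξ i| ≤ C) (ξ : Euc d) :
    ‖cf (Tm σ e) ξ‖ * √|ξ i| ≤ C * ∫ α, (√|Real.cos α|)⁻¹ ∂UU := by
  have h1 : cf (Tm σ e) ξ = ∫ α, Complex.exp ((Real.sin α * inner ℝ ξ e : ℝ) * Complex.I) *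
      cf σ (Real.cos α • ξ) ∂UU := by
    rw [cf_Tm, integral_prod _ (cf_Tm_int σ e ξ)]
    congr 1; funext α
    rw [cf, ← integral_const_mul]
    congr 1; funext y
    rw [← Complex.exp_add, inner_smul_left]
    congr 1
    push_cast
    simp
    ring
  have h2 : ‖cf (Tm σ e) ξ * (√|ξ i| : ℝ)‖ ≤ ∫ α, C * (√|Real.cos α|)⁻¹ ∂UU := by
    rw [h1, ← integral_mul_const]
    refine norm_integral_le_of_norm_le (cos_int_UU.const_mul C) ?_
    filter_upwards [cos_ne_UU] with α hα
    have hp : 0 < √|Real.cos α| := Real.sqrt_pos.2 (abs_pos.2 hα)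
    rw [norm_mul, norm_mul, Complex.norm_exp_ofReal_mul_I, one_mul, ← div_eq_mul_inv, le_div_iff₀ hp]
    have := hC (Real.cos α • ξ)
    rw [PiLp.smul_apply, smul_eq_mul, abs_mul, Real.sqrt_mul (abs_nonneg _)] at this
    rw [Complex.norm_real, Real.norm_of_nonneg (by positivity)]
    linarith
  rw [integral_const_mul] at h2
  rwa [norm_mul, Complex.norm_real, Real.norm_of_nonneg (by positivity)] at h2

theorem sphere_step {d : ℕ} (σ : Measure (Euc d)) [IsProbabilityMeasure σ] (e : Euc d)
    (he : ‖e‖ = 1) (h : ∀ᵐ y ∂σ, ‖y‖ = 1 ∧ inner ℝ y e = (0:ℝ)) : ∀ᵐ y ∂(Tm σ e), ‖y‖ = 1 := by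
  have hs : MeasurableSet {y : Euc d | ‖y‖ = 1} := measurableSet_eq_fun (by fun_prop) (by fun_prop)
  rw [Tm, ae_map_iff (Tm_meas e).aemeasurable hs]
  have h2 : ∀ᵐ p ∂(UU.prod σ), ‖p.2‖ = 1 ∧ inner ℝ p.2 e = (0:ℝ) :=
    Measure.quasiMeasurePreserving_snd.ae h
  filter_upwards [h2] with p hp
  have : ‖Real.cos p.1 • p.2 + Real.sin p.1 • e‖ ^ 2 = 1 := by
    rw [norm_add_sq_real, inner_smul_left, inner_smul_right, hp.2, norm_smul, norm_smul, hp.1, he]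
    simp
  nlinarith [norm_nonneg (Real.cos p.1 • p.2 + Real.sin p.1 • e)]

theorem sphere_ind {d : ℕ} (k : ℕ) (hk : k + 1 < d) : ∃ σ : Measure (Euc d), IsProbabilityMeasure σ ∧
    (∀ᵐ y ∂σ, ‖y‖ = 1 ∧ ∀ j : Fin d, k + 1 < j.1 → y j = 0) ∧
    ∃ C, ∀ i : Fin d, i.1 ≤ k + 1 → ∀ ξ, ‖cf σ ξ‖ * √|ξ i| ≤ C := by
  induction k with
  | zero =>
    let e0 : Euc d := EuclideanSpace.single ⟨0, by omega⟩ 1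
    let e1 : Euc d := EuclideanSpace.single ⟨1, by omega⟩ 1
    refine ⟨Tm (Measure.dirac e0) e1, inferInstance, ?_, 20, ?_⟩
    · have h1 := sphere_step (Measure.dirac e0) e1 (by simp [e1]) (by
        rw [ae_dirac_eq]
        simp [e0, e1, EuclideanSpace.inner_single_left])
      refine h1.and ?_
      have hs : MeasurableSet {y : Euc d | ∀ j : Fin d, 0 + 1 < j.1 → y j = 0} := by
        measurability
      rw [Tm, ae_map_iff (Tm_meas _).aemeasurable hs]
      have h2 : ∀ᵐ p ∂(UU.prod (Measure.dirac e0)), p.2 = e0 :=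
        Measure.quasiMeasurePreserving_snd.ae (p := fun y => y = e0) (by rw [ae_dirac_eq]; simp)
      filter_upwards [h2] with p hp j hj
      have a0 : j ≠ ⟨0, by omega⟩ := fun h => by rw [h] at hj; simp at hj
      have a1 : j ≠ ⟨1, by omega⟩ := fun h => by rw [h] at hj; simp at hj
      simp [hp, e0, e1, a0, a1]
    · intro i hi ξ
      apply cf_Tm_bound1 _ _ _ (by positivity)
      have i0 : (inner ℝ ξ e0 : ℝ) = ξ ⟨0, by omega⟩ := by
        simp [e0, EuclideanSpace.inner_single_right]
      have i1 : (inner ℝ ξ e1 : ℝ) = ξ ⟨1, by omega⟩ := by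
        simp [e1, EuclideanSpace.inner_single_right]
      rw [ae_dirac_eq, eventually_pure, i0, i1]
      apply Real.sqrt_le_sqrt
      apply Real.abs_le_sqrt
      have : i = ⟨0, by omega⟩ ∨ i = ⟨1, by omega⟩ := by
        simp only [Fin.ext_iff]; omega
      rcases this with h | h
      · rw [h]; nlinarith [sq_nonneg (ξ ⟨1, by omega⟩)]
      · rw [h]; nlinarith [sq_nonneg (ξ ⟨0, by omega⟩)]
  | succ k ih =>
    obtain ⟨σ, hσ, hsupp, C, hC⟩ := ih (by omega)
    let e1 : Euc d := EuclideanSpace.single ⟨k + 2, by omega⟩ 1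
    refine ⟨Tm σ e1, inferInstance, ?_, max 20 (C * ∫ α, (√|Real.cos α|)⁻¹ ∂UU), ?_⟩
    · have h1 := sphere_step σ e1 (by simp [e1]) (by
        filter_upwards [hsupp] with y hy
        refine ⟨hy.1, ?_⟩
        simp only [e1, EuclideanSpace.inner_single_right]
        rw [hy.2 _ (by simp)]
        simp)
      refine h1.and ?_
      have hs : MeasurableSet {y : Euc d | ∀ j : Fin d, k + 1 + 1 < j.1 → y j = 0} := by
        measurability
      rw [Tm, ae_map_iff (Tm_meas _).aemeasurable hs]
      have h2 : ∀ᵐ p ∂(UU.prod σ), ∀ j : Fin d, k + 1 < j.1 → p.2 j = 0 :=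
        Measure.quasiMeasurePreserving_snd.ae (hsupp.mono fun y hy => hy.2)
      filter_upwards [h2] with p hp j hj
      have a1 : j ≠ ⟨k + 2, by omega⟩ := fun h => by rw [h] at hj; simp at hj
      simp [hp j (by omega), e1, a1]
    · intro i hi ξ
      by_cases hik : i.1 ≤ k + 1
      · exact (cf_Tm_bound2 σ e1 i (hC i hik) ξ).trans (le_max_right _ _)
      · refine le_trans ?_ (le_max_left _ _)
        apply cf_Tm_bound1 _ _ _ (by positivity)
        refine Eventually.of_forall fun y => ?_
        apply Real.sqrt_le_sqrt
        apply Real.abs_le_sqrt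
        have : i = ⟨k + 2, by omega⟩ := by simp only [Fin.ext_iff]; omega
        rw [this]
        simp only [e1, EuclideanSpace.inner_single_right]
        simp
        positivity

theorem sphere_meas {d : ℕ} (hd : 2 ≤ d) : ∃ σ : Measure (Euc d), IsProbabilityMeasure σ ∧
    (∀ᵐ y ∂σ, ‖y‖ = 1) ∧ ∃ C, 0 < C ∧ ∀ ξ, ‖cf σ ξ‖ * √‖ξ‖ ≤ C := by
  obtain ⟨σ, h1, h2, C, hC⟩ := sphere_ind (d := d) (d - 2) (by omega)
  refine ⟨σ, h1, h2.mono fun y hy => hy.1, |C| * d + 1, by positivity, fun ξ => ?_⟩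
  have : √‖ξ‖ ≤ ∑ i, √|ξ i| := by
    rw [EuclideanSpace.norm_eq]
    have h3 : √(∑ i, ‖ξ i‖ ^ 2) ≤ (∑ i, √|ξ i|) ^ 2 := by
      refine (Real.sqrt_le_left (by positivity)).2 ?_
      set S := ∑ i, √|ξ i| with hS
      have hS0 : 0 ≤ S := by positivity
      have : ∀ i, ‖ξ i‖ ^ 2 ≤ √|ξ i| * S ^ 3 := by
        intro i
        have a : √|ξ i| ≤ S := Finset.single_le_sum (f := fun i => √|ξ i|) (fun _ _ => by positivity) (Finset.mem_univ i)
        have b : ‖ξ i‖ = √|ξ i| ^ 2 := by rw [Real.sq_sqrt (abs_nonneg _)]; rfl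
        rw [b]
        calc (√|ξ i| ^ 2) ^ 2 = √|ξ i| * √|ξ i| ^ 3 := by ring
          _ ≤ _ := by gcongr
      calc ∑ i, ‖ξ i‖ ^ 2 ≤ ∑ i, √|ξ i| * S ^ 3 := Finset.sum_le_sum fun i _ => this i
        _ = (S ^ 2) ^ 2 := by rw [← Finset.sum_mul, ← hS]; ring
    exact (Real.sqrt_le_left (by positivity)).2 h3
  calc ‖cf σ ξ‖ * √‖ξ‖ ≤ ‖cf σ ξ‖ * ∑ i, √|ξ i| := mul_le_mul_of_nonneg_left this (norm_nonneg _)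
    _ = ∑ i, ‖cf σ ξ‖ * √|ξ i| := Finset.mul_sum _ _ _
    _ ≤ ∑ i : Fin d, |C| := Finset.sum_le_sum fun i _ => (hC i (by omega) ξ).trans (le_abs_self C)
    _ ≤ _ := by simp; linarith


def WW {d : ℕ} {ι : Type*} (F : Finset ι) (x : ι → Euc d) (m : ι → ℝ) (N : ℝ) (z : Euc d) : ℝ :=
  ∑ p ∈ F, ∑ q ∈ F, m p * m q * Real.exp (-(N ^ 2 * ‖x p - x q - z‖ ^ 2 / 4))

def PP {d : ℕ} {ι : Type*} (F : Finset ι) (x : ι → Euc d) (m : ι → ℝ) (ξ : Euc d) : ℝ :=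
  ‖∑ p ∈ F, (m p : ℂ) * Complex.exp ((inner ℝ (x p) ξ : ℝ) * Complex.I)‖ ^ 2

theorem PP_eq {d : ℕ} {ι : Type*} (F : Finset ι) (x : ι → Euc d) (m : ι → ℝ) (ξ : Euc d) :
    (PP F x m ξ : ℂ) = ∑ p ∈ F, ∑ q ∈ F, (m p * m q : ℂ) *
      Complex.exp ((inner ℝ (x p - x q) ξ : ℝ) * Complex.I) := by
  rw [PP]
  push_cast
  rw [← Complex.mul_conj', map_sum, Finset.sum_mul_sum]
  refine Finset.sum_congr rfl fun p _ => Finset.sum_congr rfl fun q _ => ?_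
  rw [map_mul, ← Complex.exp_conj, inner_sub_left]
  simp only [map_mul, Complex.conj_ofReal, Complex.conj_I]
  rw [mul_mul_mul_comm, ← Complex.exp_add]
  congr 2
  push_cast; ring

def cd (d : ℕ) : ℝ := Real.pi ^ ((d : ℝ) / 2)

theorem cd_pos (d : ℕ) : 0 < cd d := Real.rpow_pos_of_pos Real.pi_pos _

theorem gauss1_int {d : ℕ} {N : ℝ} (hN : 0 < N) (w : Euc d) :
    Integrable (fun ξ : Euc d => Complex.exp ((-(‖ξ‖ ^ 2 / N ^ 2) : ℝ)) *
      Complex.exp ((inner ℝ w ξ : ℝ) * Complex.I)) := by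
  have := GaussianFourier.integrable_cexp_neg_mul_sq_norm_add (V := Euc d) (b := ((N ^ 2)⁻¹ : ℝ))
    (by rw [Complex.ofReal_re]; positivity) Complex.I w
  refine this.congr (Eventually.of_forall fun ξ => ?_)
  simp only
  rw [← Complex.exp_add]
  congr 1
  push_cast
  ring

theorem gauss1 {d : ℕ} {N : ℝ} (hN : 0 < N) (w : Euc d) :
    ∫ ξ : Euc d, Complex.exp ((-(‖ξ‖ ^ 2 / N ^ 2) : ℝ)) *
      Complex.exp ((inner ℝ w ξ : ℝ) * Complex.I) = 
      ((cd d * N ^ d * Real.exp (-(N ^ 2 * ‖w‖ ^ 2 / 4)) : ℝ) : ℂ) := by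
  have := GaussianFourier.integral_cexp_neg_mul_sq_norm_add (V := Euc d) (b := ((N ^ 2)⁻¹ : ℝ))
    (by rw [Complex.ofReal_re]; positivity) Complex.I w
  have h1 : ∫ ξ : Euc d, Complex.exp ((-(‖ξ‖ ^ 2 / N ^ 2) : ℝ)) *
      Complex.exp ((inner ℝ w ξ : ℝ) * Complex.I) = ∫ v : Euc d, 
      Complex.exp (-(((N ^ 2)⁻¹ : ℝ) : ℂ) * ‖v‖ ^ 2 + Complex.I * (inner ℝ w v : ℝ)) := by
    congr 1; funext ξ
    rw [← Complex.exp_add]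
    congr 1
    push_cast
    ring
  rw [h1, this]
  have h2 : ((Real.pi : ℂ) / (((N ^ 2)⁻¹ : ℝ) : ℂ)) ^ ((Module.finrank ℝ (Euc d) : ℂ) / 2) =
      ((cd d * N ^ d : ℝ) : ℂ) := by
    rw [finrank_euclideanSpace_fin, ← Complex.ofReal_div, show ((d : ℂ) / 2) = (((d : ℝ) / 2 : ℝ) : ℂ) by
      push_cast; rfl, ← Complex.ofReal_cpow (by positivity)]
    congr 1
    rw [div_inv_eq_mul, Real.mul_rpow Real.pi_pos.le (by positivity), cd]
    congr 1
    rw [← Real.rpow_natCast N 2, ← Real.rpow_mul hN.le, ← Real.rpow_natCast N d]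
    congr 1
    push_cast; ring
  rw [h2, Complex.ofReal_mul _ (Real.exp _), Complex.ofReal_exp]
  congr 2
  rw [Complex.I_sq]
  push_cast
  have : (N : ℂ) ≠ 0 := by exact_mod_cast hN.ne'
  field_simp

theorem gaussP_eq {d : ℕ} {ι : Type*} (F : Finset ι) (x : ι → Euc d) (m : ι → ℝ) (N : ℝ) (z ξ : Euc d) :
    Complex.exp ((-(‖ξ‖ ^ 2 / N ^ 2) : ℝ)) * PP F x m ξ * Complex.exp ((inner ℝ (-z) ξ : ℝ) * Complex.I)
    = ∑ p ∈ F, ∑ q ∈ F, (m p * m q : ℂ) * (Complex.exp ((-(‖ξ‖ ^ 2 / N ^ 2) : ℝ)) *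
      Complex.exp ((inner ℝ (x p - x q - z) ξ : ℝ) * Complex.I)) := by
  rw [PP_eq, Finset.mul_sum, Finset.sum_mul]
  refine Finset.sum_congr rfl fun p _ => ?_
  rw [Finset.mul_sum, Finset.sum_mul]
  refine Finset.sum_congr rfl fun q _ => ?_
  rw [sub_eq_add_neg (x p - x q) z, inner_add_left, Complex.ofReal_add, add_mul, Complex.exp_add]
  ring

theorem gaussP_int {d : ℕ} {ι : Type*} (F : Finset ι) (x : ι → Euc d) (m : ι → ℝ) {N : ℝ} (hN : 0 < N)
    (z : Euc d) : Integrable (fun ξ : Euc d => Complex.exp ((-(‖ξ‖ ^ 2 / N ^ 2) : ℝ)) * PP F x m ξ *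
      Complex.exp ((inner ℝ (-z) ξ : ℝ) * Complex.I)) := by
  simp_rw [gaussP_eq]
  exact integrable_finsetSum _ fun p _ => integrable_finsetSum _ fun q _ => (gauss1_int hN _).const_mul _

theorem gaussP {d : ℕ} {ι : Type*} (F : Finset ι) (x : ι → Euc d) (m : ι → ℝ) {N : ℝ} (hN : 0 < N)
    (z : Euc d) : ∫ ξ : Euc d, Complex.exp ((-(‖ξ‖ ^ 2 / N ^ 2) : ℝ)) * PP F x m ξ *
      Complex.exp ((inner ℝ (-z) ξ : ℝ) * Complex.I) = ((cd d * N ^ d * WW F x m N z : ℝ) : ℂ) := by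
  simp_rw [gaussP_eq]
  rw [integral_finsetSum _ fun p _ => integrable_finsetSum _ fun q _ => (gauss1_int hN _).const_mul _]
  rw [WW, Finset.mul_sum, Complex.ofReal_sum]
  refine Finset.sum_congr rfl fun p _ => ?_
  rw [integral_finsetSum _ fun q _ => (gauss1_int hN _).const_mul _]
  rw [Finset.mul_sum, Complex.ofReal_sum]
  refine Finset.sum_congr rfl fun q _ => ?_
  rw [integral_const_mul, gauss1 hN]
  push_cast; ring

theorem gaussP0_int {d : ℕ} {ι : Type*} (F : Finset ι) (x : ι → Euc d) (m : ι → ℝ) {N : ℝ} (hN : 0 < N) :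
    Integrable (fun ξ : Euc d => Real.exp (-(‖ξ‖ ^ 2 / N ^ 2)) * PP F x m ξ) := by
  have := (gaussP_int F x m hN 0).re
  refine this.congr (Eventually.of_forall fun ξ => ?_)
  simp only [neg_zero, inner_zero_left, Complex.ofReal_zero, zero_mul, Complex.exp_zero, mul_one]
  rw [← Complex.ofReal_exp, ← Complex.ofReal_mul]
  exact Complex.ofReal_re _

theorem gaussP0 {d : ℕ} {ι : Type*} (F : Finset ι) (x : ι → Euc d) (m : ι → ℝ) {N : ℝ} (hN : 0 < N) :
    ∫ ξ : Euc d, Real.exp (-(‖ξ‖ ^ 2 / N ^ 2)) * PP F x m ξ = cd d * N ^ d * WW F x m N 0 := by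
  have := gaussP F x m hN 0
  simp only [neg_zero, inner_zero_left, Complex.ofReal_zero, zero_mul, Complex.exp_zero, mul_one] at this
  simp_rw [← Complex.ofReal_exp, ← Complex.ofReal_mul] at this
  rw [integral_complex_ofReal] at this
  exact_mod_cast this

def II {d : ℕ} {ι : Type*} (σ : Measure (Euc d)) (t : ℝ) (F : Finset ι) (x : ι → Euc d) (m : ι → ℝ) (N : ℝ) : ℝ :=
  ∫ θ, N ^ d * WW F x m N (t • θ) ∂σ

theorem PP_cont {d : ℕ} {ι : Type*} (F : Finset ι) (x : ι → Euc d) (m : ι → ℝ) :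
    Continuous (PP F x m) := by
  unfold PP; fun_prop

theorem II_eq {d : ℕ} {ι : Type*} (σ : Measure (Euc d)) [IsProbabilityMeasure σ] (t : ℝ)
    (F : Finset ι) (x : ι → Euc d) (m : ι → ℝ) {N : ℝ} (hN : 0 < N) :
    ((cd d * II σ t F x m N : ℝ) : ℂ) = ∫ ξ : Euc d,
      ((Real.exp (-(‖ξ‖ ^ 2 / N ^ 2)) * PP F x m ξ : ℝ) : ℂ) * cf σ (-t • ξ) := by
  have hP := PP_cont F x m
  have hint : Integrable (fun p : Euc d × Euc d => Complex.exp ((-(‖p.2‖ ^ 2 / N ^ 2) : ℝ)) * PP F x m p.2 *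
      Complex.exp ((inner ℝ (-(t • p.1)) p.2 : ℝ) * Complex.I)) (σ.prod volume) := by
    have h1 : Integrable (fun p : Euc d × Euc d => Real.exp (-(‖p.2‖ ^ 2 / N ^ 2)) * PP F x m p.2) (σ.prod volume) :=
      (gaussP0_int F x m hN).comp_snd σ
    refine h1.mono (by fun_prop) (Eventually.of_forall fun p => ?_)
    rw [norm_mul, Complex.norm_exp_ofReal_mul_I, mul_one, ← Complex.ofReal_exp, ← Complex.ofReal_mul, Complex.norm_real]
  have h2 := integral_integral_swap (f := fun θ ξ : Euc d => Complex.exp ((-(‖ξ‖ ^ 2 / N ^ 2) : ℝ)) * PP F x m ξ *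
      Complex.exp ((inner ℝ (-(t • θ)) ξ : ℝ) * Complex.I)) hint
  simp_rw [gaussP F x m hN] at h2
  rw [integral_complex_ofReal] at h2
  simp_rw [mul_assoc, integral_const_mul] at h2
  rw [II, integral_const_mul, h2]
  congr 1; funext ξ
  rw [cf, Complex.ofReal_mul, Complex.ofReal_exp, mul_assoc]
  congr 4; funext θ
  congr 3
  simp [inner_smul_left, real_inner_comm, inner_neg_left]

theorem II_diff {d : ℕ} {ι : Type*} (σ : Measure (Euc d)) [IsProbabilityMeasure σ] {C t : ℝ} (ht : 0 < t)
    (hC0 : 0 < C) (hC : ∀ ξ, ‖cf σ ξ‖ * √‖ξ‖ ≤ C)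
    (F : Finset ι) (x : ι → Euc d) (m : ι → ℝ) {N : ℝ} (hN : 0 < N) :
    |II σ t F x m (2 * N) - II σ t F x m N| ≤ C / (√t * √N) * ((2 * N) ^ d * WW F x m (2 * N) 0) := by
  have hN2 : 0 < 2 * N := by positivity
  have hP := PP_cont F x m
  have hP0 : ∀ ξ, 0 ≤ PP F x m ξ := fun ξ => by unfold PP; positivity
  have hcf1 : ∀ ξ, ‖cf σ ξ‖ ≤ 1 := by
    intro ξ
    calc _ ≤ 1 * σ.real univ := norm_integral_le_of_norm_le_const (Eventually.of_forall fun y => by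
          rw [Complex.norm_exp_ofReal_mul_I])
      _ = 1 := by simp
  have hcfc : Continuous (cf σ) := by
    refine continuous_of_dominated (bound := fun _ => 1) (fun ξ => by fun_prop) (fun ξ => Eventually.of_forall fun y => ?_)
      (integrable_const _) (Eventually.of_forall fun y => by fun_prop)
    rw [Complex.norm_exp_ofReal_mul_I]
  have hint : ∀ {N : ℝ}, 0 < N → Integrable (fun ξ : Euc d => 
      ((Real.exp (-(‖ξ‖ ^ 2 / N ^ 2)) * PP F x m ξ : ℝ) : ℂ) * cf σ (-t • ξ)) := by
    intro N hN
    refine (gaussP0_int F x m hN).mono (by fun_prop) (Eventually.of_forall fun ξ => ?_)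
    rw [norm_mul, Complex.norm_real]
    exact mul_le_of_le_one_right (norm_nonneg _) (hcf1 _)
  have key : |cd d * (II σ t F x m (2 * N) - II σ t F x m N)| ≤ 
      C / (√t * √N) * (cd d * (2 * N) ^ d * WW F x m (2 * N) 0) := by
    rw [← gaussP0 F x m hN2, ← integral_const_mul, ← Real.norm_eq_abs, ← Complex.norm_real, mul_sub, Complex.ofReal_sub,
      II_eq σ t F x m hN, II_eq σ t F x m hN2, ← integral_sub (hint hN2) (hint hN)]
    refine norm_integral_le_of_norm_le ((gaussP0_int F x m hN2).const_mul _) (Eventually.of_forall fun ξ => ?_)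
    rw [← sub_mul, ← Complex.ofReal_sub, norm_mul, Complex.norm_real, ← sub_mul, norm_mul, Real.norm_of_nonneg (hP0 ξ)]
    set r := √‖ξ‖ / √N with hr
    have hr0 : 0 ≤ r := by positivity
    set v := ‖ξ‖ ^ 2 / (2 * N) ^ 2 with hv
    have hv0 : 0 ≤ v := by positivity
    have hr4 : r ^ 4 = 4 * v := by
      rw [hr, hv, div_pow, show √‖ξ‖ ^ 4 = (√‖ξ‖ ^ 2) ^ 2 by ring, show √N ^ 4 = (√N ^ 2) ^ 2 by ring,
        Real.sq_sqrt (norm_nonneg _), Real.sq_sqrt hN.le]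
      field_simp; norm_num
    have h4 : ‖ξ‖ ^ 2 / N ^ 2 = v + 3 * v := by rw [hv]; field_simp; norm_num
    rw [h4, neg_add, Real.exp_add]
    have h5 : 1 - Real.exp (-(3 * v)) ≤ r := by
      rcases le_total 1 r with h | h
      · linarith [Real.exp_pos (-(3 * v))]
      · have h6 := Real.add_one_le_exp (-(3 * v))
        have : r ^ 4 ≤ r := by
          calc r ^ 4 = r * r ^ 3 := by ring
            _ ≤ r * 1 := by gcongr; exact pow_le_one₀ hr0 h
            _ = r := mul_one r
        linarith
    have h5' : 0 ≤ 1 - Real.exp (-(3 * v)) := by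
      have := Real.exp_le_one_iff.2 (show -(3 * v) ≤ 0 by linarith)
      linarith
    have h7 : ‖Real.exp (-v) - Real.exp (-v) * Real.exp (-(3 * v))‖ = Real.exp (-v) * (1 - Real.exp (-(3 * v))) := by
      rw [← Real.norm_of_nonneg (mul_nonneg (Real.exp_pos (-v)).le h5')]; congr 1; ring
    rw [h7]
    have h8 : (1 - Real.exp (-(3 * v))) * ‖cf σ (-t • ξ)‖ ≤ C / (√t * √N) := by
      have h9 := hC (-t • ξ)
      rw [norm_smul, norm_neg, Real.norm_of_nonneg ht.le, Real.sqrt_mul ht.le] at h9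
      calc _ ≤ r * ‖cf σ (-t • ξ)‖ := mul_le_mul_of_nonneg_right h5 (norm_nonneg _)
        _ ≤ _ := by
          rw [hr, le_div_iff₀ (by positivity)]
          have : √‖ξ‖ / √N * ‖cf σ (-t • ξ)‖ * (√t * √N) = ‖cf σ (-t • ξ)‖ * (√t * √‖ξ‖) := by
            have : √N ≠ 0 := by positivity
            field_simp
          rw [this]; exact h9
    calc _ = (Real.exp (-v) * PP F x m ξ) * ((1 - Real.exp (-(3 * v))) * ‖cf σ (-t • ξ)‖) := by ring
      _ ≤ (Real.exp (-v) * PP F x m ξ) * (C / (√t * √N)) := 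
        mul_le_mul_of_nonneg_left h8 (mul_nonneg (Real.exp_pos _).le (hP0 ξ))
      _ = _ := by ring
  rw [abs_mul, abs_of_pos (cd_pos d)] at key
  refine le_of_mul_le_mul_left (key.trans_eq ?_) (cd_pos d)
  ring


theorem geo_sum (L p : ℕ) : ∑ n ∈ Finset.range L, Real.exp (-|(n:ℝ) - p|) ≤ 4 := by
  have hg : ∀ L : ℕ, ∑ n ∈ Finset.range L, Real.exp (-(n:ℝ)) ≤ 2 := by
    intro L
    have h1 : Real.exp (-1) ≤ 1 / 2 := by
      rw [Real.exp_neg, one_div]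
      exact inv_anti₀ (by norm_num) (by linarith [Real.exp_one_gt_d9])
    have h3 : ∀ n : ℕ, Real.exp (-(n:ℝ)) ≤ (1 / 2) ^ n := by
      intro n
      rw [show -(n:ℝ) = n * (-1) by ring, Real.exp_nat_mul]
      exact pow_le_pow_left₀ (Real.exp_pos _).le h1 n
    calc _ ≤ ∑ n ∈ Finset.range L, (1 / 2 : ℝ) ^ n := Finset.sum_le_sum fun n _ => h3 n
      _ ≤ 2 := sum_geometric_two_le L
  calc _ ≤ ∑ n ∈ Finset.range (p + L), Real.exp (-|(n:ℝ) - p|) :=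
        Finset.sum_le_sum_of_subset_of_nonneg (Finset.range_mono (by omega)) fun _ _ _ => (Real.exp_pos _).le
    _ = ∑ n ∈ Finset.range p, Real.exp (-|(n:ℝ) - p|) + ∑ n ∈ Finset.range L, Real.exp (-|((p + n : ℕ):ℝ) - p|) := by
        rw [Finset.sum_range_add]
    _ ≤ 2 + 2 := by
        refine add_le_add ?_ ?_
        · rw [← Finset.sum_range_reflect]
          refine le_trans (Finset.sum_le_sum fun n hn => ?_) (hg p)
          rw [Finset.mem_range] at hn
          apply Real.exp_le_exp.2
          rw [show p - 1 - n = p - (n + 1) by omega, Nat.cast_sub (by omega)]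
          push_cast
          rw [show (p:ℝ) - (n + 1) - p = -(n + 1) by ring, abs_neg, abs_of_nonneg (by positivity)]
          linarith
        · refine le_trans (Finset.sum_le_sum fun n _ => ?_) (hg L)
          push_cast
          rw [add_sub_cancel_left, abs_of_nonneg (by positivity)]
    _ = 4 := by norm_num

theorem WW0_bound {d : ℕ} {ι : Type*} (F : Finset ι) (x : ι → Euc d) (m : ι → ℝ) (j : ℕ) {B : ℝ}
    (hx : ∀ c ∈ F, x c ∈ unitCube d) (hm : ∀ c ∈ F, 0 ≤ m c) (hB0 : 0 ≤ B)
    (hB : ∀ q, ∑ c ∈ F with ccode j (x c) = q, m c ≤ B) :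
    WW F x m (2 ^ j) 0 ≤ (∑ c ∈ F, m c) * (B * (Real.exp 2 * 4) ^ d) := by
  rw [WW, Finset.sum_mul]
  refine Finset.sum_le_sum fun p hp => ?_
  simp_rw [mul_assoc, ← Finset.mul_sum]
  refine mul_le_mul_of_nonneg_left ?_ (hm p hp)
  set a := ccode j (x p) with ha
  have h1 : ∀ q ∈ F, Real.exp (-((2 ^ j) ^ 2 * ‖x p - x q - 0‖ ^ 2 / 4)) ≤
      ∏ i, (Real.exp 2 * Real.exp (-|(ccode j (x q) i : ℝ) - a i|)) := by
    intro q hq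
    simp_rw [← Real.exp_add]
    rw [← Real.exp_sum]
    apply Real.exp_le_exp.2
    rw [sub_zero, EuclideanSpace.norm_sq_eq, Finset.mul_sum, Finset.sum_div, ← Finset.sum_neg_distrib]
    refine Finset.sum_le_sum fun i _ => ?_
    have b1 := ccode_bounds j (hx p hp) i
    have b2 := ccode_bounds j (hx q hq) i
    rw [← ha] at b1
    rw [PiLp.sub_apply, Real.norm_eq_abs, sq_abs]
    set y := (2:ℝ) ^ j * x p i
    set w := (2:ℝ) ^ j * x q i
    have e : ((2:ℝ) ^ j) ^ 2 * (x p i - x q i) ^ 2 = (y - w) ^ 2 := by simp only [y, w]; ring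
    rw [e]
    have h3 : |(ccode j (x q) i : ℝ) - a i| ≤ |y - w| + 1 := by
      rw [abs_le]
      constructor <;> cases abs_cases (y - w) <;> linarith
    have := sq_nonneg (|y - w| / 2 - 1)
    have h4 : |y - w| ^ 2 = (y - w) ^ 2 := sq_abs _
    nlinarith
  calc ∑ q ∈ F, m q * Real.exp (-((2 ^ j) ^ 2 * ‖x p - x q - 0‖ ^ 2 / 4))
      ≤ ∑ q ∈ F, m q * ∏ i, (Real.exp 2 * Real.exp (-|(ccode j (x q) i : ℝ) - a i|)) :=
        Finset.sum_le_sum fun q hq => mul_le_mul_of_nonneg_left (h1 q hq) (hm q hq)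
    _ = ∑ c ∈ BB d j, ∑ q ∈ F with ccode j (x q) = c, m q * ∏ i, (Real.exp 2 * Real.exp (-|(ccode j (x q) i : ℝ) - a i|)) :=
        (Finset.sum_fiberwise_of_maps_to (fun q _ => ccode_mem j (x q)) _).symm
    _ = ∑ c ∈ BB d j, (∑ q ∈ F with ccode j (x q) = c, m q) * ∏ i, (Real.exp 2 * Real.exp (-|(c i : ℝ) - a i|)) := by
        refine Finset.sum_congr rfl fun c _ => ?_
        rw [Finset.sum_mul]
        refine Finset.sum_congr rfl fun q hq => ?_
        rw [(Finset.mem_filter.1 hq).2]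
    _ ≤ ∑ c ∈ BB d j, B * ∏ i, (Real.exp 2 * Real.exp (-|(c i : ℝ) - a i|)) :=
        Finset.sum_le_sum fun c _ => mul_le_mul_of_nonneg_right (hB c)
          (Finset.prod_nonneg fun i _ => by positivity)
    _ = B * ∏ i : Fin d, ∑ n ∈ Finset.range (2 ^ j), (Real.exp 2 * Real.exp (-|(n : ℝ) - a i|)) := by
        rw [← Finset.mul_sum, Finset.prod_univ_sum]; rfl
    _ ≤ B * ∏ i : Fin d, (Real.exp 2 * 4) := by
        refine mul_le_mul_of_nonneg_left (Finset.prod_le_prod (fun i _ => Finset.sum_nonneg fun _ _ => by positivity) fun i _ => ?_) hB0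
        rw [← Finset.mul_sum]
        exact mul_le_mul_of_nonneg_left (geo_sum _ _) (Real.exp_pos _).le
    _ = _ := by simp

theorem WW_lower {d : ℕ} {ι : Type*} (F : Finset ι) (x : ι → Euc d) (m : ι → ℝ) (l : ℕ) (hl : 1 ≤ l)
    {ρ : ℝ} (hx : ∀ c ∈ F, x c ∈ unitCube d) (hm : ∀ c ∈ F, 0 ≤ m c)
    (G : Finset (Idx d)) (hG : G ⊆ BB d (l + 1))
    (hGc : (1 - 3 * ρ) * 2 ^ ((l + 1) * d) ≤ G.card)
    (hGm : ∀ q ∈ G, ∑ c ∈ F with ccode (l + 1) (x c) = q, m c = 1 / 2 ^ ((l + 1) * d))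
    (z : Euc d) (hz : ∀ i, |z i| ≤ 1 / 4) :
    ((2:ℝ)⁻¹ ^ d - 6 * ρ) * Real.exp (-d) ≤ ((2:ℝ) ^ (l + 1)) ^ d * WW F x m (2 ^ (l + 1)) z := by
  set k := l + 1 with hk
  let v : Fin d → ℤ := fun i => ⌊(2:ℝ) ^ k * z i⌋
  let vp : Idx d := fun i => (v i).toNat
  let vm : Idx d := fun i => (-(v i)).toNat
  have h2l : (2:ℝ) ≤ 2 ^ l := by
    calc (2:ℝ) = 2 ^ 1 := by norm_num
      _ ≤ 2 ^ l := pow_le_pow_right₀ (by norm_num) hl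
  have hkl : (2:ℝ) ^ k = 2 * 2 ^ l := by rw [hk, pow_succ]; ring
  have hkln : 2 ^ k = 2 * 2 ^ l := by rw [hk, pow_succ]; ring
  have hvb : ∀ i, |v i| ≤ 2 ^ l := by
    intro i
    have h1 := Int.floor_le ((2:ℝ) ^ k * z i)
    have h2 := Int.lt_floor_add_one ((2:ℝ) ^ k * z i)
    have h3 := abs_le.1 (hz i)
    have h4 : (|(v i : ℝ)|) ≤ 2 ^ l := by
      rw [abs_le]
      simp only [v]
      rw [hkl] at *
      constructor <;> nlinarith
    exact_mod_cast h4
  have hvp : ∀ i, vp i ≤ 2 ^ l := by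
    intro i
    have := abs_le.1 (hvb i)
    simp only [vp]
    rw [Int.toNat_le]; push_cast; exact this.2
  have hvm : ∀ i, vm i ≤ 2 ^ l := by
    intro i
    have := abs_le.1 (hvb i)
    simp only [vm]
    rw [Int.toNat_le]; push_cast; linarith
  have hvpm : ∀ i, (vp i : ℝ) - vm i = v i := by
    intro i
    have : (vp i : ℤ) - vm i = v i := by simp only [vp, vm]; omega
    exact_mod_cast this
  have hmem : ∀ w : Idx d, (∀ i, w i ≤ 2 ^ l) → ∀ c ∈ BB d l, c + w ∈ BB d k := by
    intro w hw c hc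
    simp only [BB, Fintype.mem_piFinset, Finset.mem_range] at hc ⊢
    intro i
    have := hc i; have := hw i
    rw [Pi.add_apply, hkln]; omega
  let Q := (BB d l).filter (fun c => c + vp ∈ G ∧ c + vm ∈ G)
  have hbad : ((BB d k \ G).card : ℝ) ≤ 3 * ρ * 2 ^ (k * d) := by
    rw [Finset.card_sdiff_of_subset hG, Nat.cast_sub (Finset.card_le_card hG), card_BB]
    push_cast
    linarith
  have hcount : (2:ℝ) ^ (l * d) - 6 * ρ * 2 ^ (k * d) ≤ Q.card := by
    have hsub : BB d l \ Q ⊆ ((BB d l).filter (fun c => c + vp ∉ G)) ∪ ((BB d l).filter (fun c => c + vm ∉ G)) := by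
      intro c hc
      simp only [Q, Finset.mem_sdiff, Finset.mem_filter, Finset.mem_union] at hc ⊢
      tauto
    have hone : ∀ w : Idx d, (∀ i, w i ≤ 2 ^ l) → ((BB d l).filter (fun c => c + w ∉ G)).card ≤ (BB d k \ G).card := by
      intro w hw
      refine Finset.card_le_card_of_injOn (fun c => c + w) ?_ (fun a _ b _ h => add_right_cancel h)
      intro c hc
      have hc := Finset.mem_filter.1 (Finset.mem_coe.1 hc)
      exact Finset.mem_coe.2 (Finset.mem_sdiff.2 ⟨hmem w hw c hc.1, hc.2⟩)
    have h1 := (Finset.card_le_card hsub).trans (Finset.card_union_le _ _)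
    have h2 := hone vp hvp
    have h3 := hone vm hvm
    have h4 : (BB d l \ Q).card + Q.card = 2 ^ (l * d) := by
      rw [← card_BB, Finset.card_sdiff_add_card_eq_card (Finset.filter_subset _ _)]
    have h5 : ((2:ℝ)) ^ (l * d) = (BB d l \ Q).card + Q.card := by exact_mod_cast h4.symm
    have h6 : ((BB d l \ Q).card : ℝ) ≤ (BB d k \ G).card + (BB d k \ G).card := by exact_mod_cast h1.trans (add_le_add h2 h3)
    linarith
  have hE : ∀ c ∈ Q, ∀ p ∈ F, ccode k (x p) = c + vp → ∀ q ∈ F, ccode k (x q) = c + vm →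
      Real.exp (-d) ≤ Real.exp (-((2 ^ k) ^ 2 * ‖x p - x q - z‖ ^ 2 / 4)) := by
    intro c _ p hp hpc q hq hqc
    apply Real.exp_le_exp.2
    apply neg_le_neg
    rw [EuclideanSpace.norm_sq_eq, Finset.mul_sum, Finset.sum_div]
    calc _ ≤ ∑ i : Fin d, (1:ℝ) := Finset.sum_le_sum fun i _ => ?_
      _ = d := by simp
    have b1 := ccode_bounds k (hx p hp) i
    have b2 := ccode_bounds k (hx q hq) i
    rw [hpc] at b1
    rw [hqc] at b2
    simp only [Pi.add_apply, Nat.cast_add] at b1 b2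
    have h1 : (v i : ℝ) ≤ (2:ℝ) ^ k * z i := Int.floor_le ((2:ℝ) ^ k * z i)
    have h2 : (2:ℝ) ^ k * z i < v i + 1 := Int.lt_floor_add_one ((2:ℝ) ^ k * z i)
    have h3 := hvpm i
    rw [PiLp.sub_apply, PiLp.sub_apply, Real.norm_eq_abs, sq_abs]
    have e : ((2:ℝ) ^ k) ^ 2 * (x p i - x q i - z i) ^ 2 = (2 ^ k * x p i - 2 ^ k * x q i - 2 ^ k * z i) ^ 2 := by ring
    rw [e]
    have : (2 ^ k * x p i - 2 ^ k * x q i - 2 ^ k * z i) ^ 2 ≤ 2 ^ 2 := by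
      apply sq_le_sq'
      · linarith [b1.1, b2.2]
      · linarith [b1.2, b2.1]
    linarith
  have hW : (Q.card : ℝ) * (1 / 2 ^ (k * d) * (1 / 2 ^ (k * d) * Real.exp (-d))) ≤ WW F x m (2 ^ k) z := by
    have : DecidableEq ι := Classical.decEq ι
    have hdisj : (Q : Set (Idx d)).PairwiseDisjoint (fun c => F.filter (fun p => ccode k (x p) = c + vp)) := by
      intro a _ b _ hab
      rw [Function.onFun, Finset.disjoint_left]
      intro p hp1 hp2
      exact hab (add_right_cancel ((Finset.mem_filter.1 hp1).2.symm.trans (Finset.mem_filter.1 hp2).2))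
    have hnn : ∀ p ∈ F, 0 ≤ ∑ q ∈ F, m p * m q * Real.exp (-((2 ^ k) ^ 2 * ‖x p - x q - z‖ ^ 2 / 4)) :=
      fun p hp => Finset.sum_nonneg fun q hq => mul_nonneg (mul_nonneg (hm p hp) (hm q hq)) (Real.exp_pos _).le
    calc _ = ∑ c ∈ Q, (1 / 2 ^ (k * d) * (1 / 2 ^ (k * d) * Real.exp (-d))) := by simp
      _ ≤ ∑ c ∈ Q, ∑ p ∈ F with ccode k (x p) = c + vp, ∑ q ∈ F, m p * m q * Real.exp (-((2 ^ k) ^ 2 * ‖x p - x q - z‖ ^ 2 / 4)) := by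
          refine Finset.sum_le_sum fun c hc => ?_
          have hcG := (Finset.mem_filter.1 hc).2
          rw [← hGm _ hcG.1, Finset.sum_mul]
          refine Finset.sum_le_sum fun p hp => ?_
          have hp := Finset.mem_filter.1 hp
          rw [hGm _ hcG.1, ← hGm _ hcG.2, Finset.sum_mul, Finset.mul_sum]
          calc _ ≤ ∑ q ∈ F with ccode k (x q) = c + vm, m p * m q * Real.exp (-((2 ^ k) ^ 2 * ‖x p - x q - z‖ ^ 2 / 4)) := by
                refine Finset.sum_le_sum fun q hq => ?_
                have hq := Finset.mem_filter.1 hq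
                rw [← mul_assoc]
                exact mul_le_mul_of_nonneg_left (hE c hc p hp.1 hp.2 q hq.1 hq.2) (mul_nonneg (hm p hp.1) (hm q hq.1))
            _ ≤ _ := Finset.sum_le_sum_of_subset_of_nonneg (Finset.filter_subset _ _) fun q hq _ =>
                mul_nonneg (mul_nonneg (hm p hp.1) (hm q hq)) (Real.exp_pos _).le
      _ = ∑ p ∈ Q.biUnion (fun c => F.filter (fun p => ccode k (x p) = c + vp)), ∑ q ∈ F, m p * m q * Real.exp (-((2 ^ k) ^ 2 * ‖x p - x q - z‖ ^ 2 / 4)) :=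
          (Finset.sum_biUnion hdisj).symm
      _ ≤ _ := Finset.sum_le_sum_of_subset_of_nonneg (Finset.biUnion_subset.2 fun c _ => Finset.filter_subset _ _)
          fun p hp _ => hnn p hp
  have hN : ((2:ℝ) ^ k) ^ d = 2 ^ (k * d) := (pow_mul _ _ _).symm
  have hNl : (2:ℝ)⁻¹ ^ d * 2 ^ (k * d) = 2 ^ (l * d) := by
    rw [pow_mul, pow_mul, ← mul_pow, hkl, inv_mul_cancel_left₀ (by norm_num)]
  rw [hN]
  have hpos : (0:ℝ) < 2 ^ (k * d) := by positivity
  calc _ = (2 ^ (l * d) - 6 * ρ * 2 ^ (k * d)) * (1 / 2 ^ (k * d) * Real.exp (-d)) := by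
        rw [← hNl]; field_simp
    _ ≤ Q.card * (1 / 2 ^ (k * d) * Real.exp (-d)) := mul_le_mul_of_nonneg_right hcount (by positivity)
    _ = 2 ^ (k * d) * ((Q.card : ℝ) * (1 / 2 ^ (k * d) * (1 / 2 ^ (k * d) * Real.exp (-d)))) := by field_simp
    _ ≤ _ := mul_le_mul_of_nonneg_left hW hpos.le


theorem WW_int {d : ℕ} {ι : Type*} (σ : Measure (Euc d)) [IsProbabilityMeasure σ] (t : ℝ)
    (F : Finset ι) (x : ι → Euc d) (m : ι → ℝ) (N : ℝ) :
    Integrable (fun θ => N ^ d * WW F x m N (t • θ)) σ := by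
  refine Integrable.const_mul ?_ _
  unfold WW
  refine integrable_finsetSum _ fun p _ => integrable_finsetSum _ fun q _ => Integrable.const_mul ?_ _
  refine Integrable.of_bound (C := 1) (by fun_prop) (Eventually.of_forall fun θ => ?_)
  rw [Real.norm_of_nonneg (Real.exp_pos _).le, Real.exp_le_one_iff]
  have : 0 ≤ N ^ 2 * ‖x p - x q - t • θ‖ ^ 2 / 4 := by positivity
  linarith

theorem II_upper {d : ℕ} {ι : Type*} (σ : Measure (Euc d)) [IsProbabilityMeasure σ] (hσ : ∀ᵐ y ∂σ, ‖y‖ = 1)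
    {t δ : ℝ} (ht : 0 < t) (hδ : 0 < δ)
    (F : Finset ι) (x : ι → Euc d) (m : ι → ℝ) (hm : ∀ c ∈ F, 0 ≤ m c) (hm1 : ∑ c ∈ F, m c ≤ 1) {N : ℝ} (hN : 0 < N)
    (hgap : ∀ p ∈ F, ∀ q ∈ F, δ ≤ |dist (x p) (x q) - t|) :
    II σ t F x m N ≤ N ^ d * Real.exp (-(N ^ 2 * δ ^ 2 / 4)) := by
  have h : ∀ᵐ θ ∂σ, N ^ d * WW F x m N (t • θ) ≤ N ^ d * Real.exp (-(N ^ 2 * δ ^ 2 / 4)) := by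
    filter_upwards [hσ] with θ hθ
    refine mul_le_mul_of_nonneg_left ?_ (by positivity)
    calc WW F x m N (t • θ) ≤ ∑ p ∈ F, ∑ q ∈ F, m p * m q * Real.exp (-(N ^ 2 * δ ^ 2 / 4)) := by
          refine Finset.sum_le_sum fun p hp => Finset.sum_le_sum fun q hq => ?_
          refine mul_le_mul_of_nonneg_left ?_ (mul_nonneg (hm p hp) (hm q hq))
          apply Real.exp_le_exp.2
          have h1 : δ ≤ ‖x p - x q - t • θ‖ := by
            refine (hgap p hp q hq).trans ?_
            have := abs_norm_sub_norm_le (x p - x q) (t • θ)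
            rwa [norm_smul, hθ, mul_one, Real.norm_of_nonneg ht.le, ← dist_eq_norm] at this
          gcongr
      _ = (∑ p ∈ F, m p) * (∑ p ∈ F, m p) * Real.exp (-(N ^ 2 * δ ^ 2 / 4)) := by
          rw [Finset.sum_mul_sum, Finset.sum_mul]
          refine Finset.sum_congr rfl fun p _ => by rw [Finset.sum_mul]
      _ ≤ 1 * 1 * Real.exp (-(N ^ 2 * δ ^ 2 / 4)) := by
          have := Finset.sum_nonneg hm
          gcongr
      _ = _ := by ring
  calc _ ≤ ∫ θ, N ^ d * Real.exp (-(N ^ 2 * δ ^ 2 / 4)) ∂σ := integral_mono_ae (WW_int σ t F x m N) (integrable_const _) h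
    _ = _ := by simp

theorem II_lower {d : ℕ} {ι : Type*} (σ : Measure (Euc d)) [IsProbabilityMeasure σ] (hσ : ∀ᵐ y ∂σ, ‖y‖ = 1)
    {t : ℝ} (ht : 0 < t) (ht4 : t ≤ 1 / 4)
    (F : Finset ι) (x : ι → Euc d) (m : ι → ℝ) {N c : ℝ}
    (h : ∀ z : Euc d, (∀ i, |z i| ≤ 1 / 4) → c ≤ N ^ d * WW F x m N z) :
    c ≤ II σ t F x m N := by
  calc c = ∫ θ, c ∂σ := by simp
    _ ≤ _ := by
      refine integral_mono_ae (integrable_const _) (WW_int σ t F x m N) ?_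
      filter_upwards [hσ] with θ hθ
      refine h _ fun i => ?_
      have h1 := PiLp.norm_apply_le θ i
      rw [hθ, Real.norm_eq_abs] at h1
      rw [PiLp.smul_apply, smul_eq_mul, abs_mul, abs_of_pos ht]
      nlinarith [abs_nonneg (θ i)]

theorem pow_step (j : ℕ) {ε : ℝ} (hε : ε ≤ 1 / 4) :
    (2:ℝ) ^ (((j + 1 : ℕ) : ℝ) * ε) / √(2 ^ j) ≤ 2 * ((2:ℝ) ^ (-(1/4) : ℝ)) ^ j := by
  rw [Real.sqrt_eq_rpow, ← Real.rpow_natCast 2 j, ← Real.rpow_mul (by norm_num), ← Real.rpow_sub (by norm_num),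
    ← Real.rpow_natCast, ← Real.rpow_mul (by norm_num)]
  nth_rewrite 3 [← Real.rpow_one 2]
  rw [← Real.rpow_add (by norm_num)]
  apply Real.rpow_le_rpow_of_exponent_le (by norm_num)
  push_cast
  have : (0:ℝ) ≤ j := by positivity
  nlinarith

theorem II_tele {d : ℕ} {ι : Type*} (σ : Measure (Euc d)) [IsProbabilityMeasure σ] {C t ε ρ : ℝ} (ht : 1 / 8 ≤ t)
    (hC0 : 0 < C) (hC : ∀ ξ, ‖cf σ ξ‖ * √‖ξ‖ ≤ C) (hε : ε ≤ 1 / 4) (hρ : 0 < ρ)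
    (F : Finset ι) (x : ι → Euc d) (m : ι → ℝ) (k n : ℕ)
    (hx : ∀ c ∈ F, x c ∈ unitCube d) (hm : ∀ c ∈ F, 0 ≤ m c) (hm1 : ∑ c ∈ F, m c ≤ 1)
    (hB : ∀ j, k ≤ j → j ≤ k + n → ∀ q, ∑ c ∈ F with ccode j (x c) = q, m c
        ≤ ρ⁻¹ * (2:ℝ) ^ (j * ε) / 2 ^ (j * d)) :
    II σ t F x m (2 ^ k) - II σ t F x m (2 ^ (k + n)) ≤
      (6 * C * (Real.exp 2 * 4) ^ d * ρ⁻¹) * ((2:ℝ) ^ (-(1/4) : ℝ)) ^ k / (1 - (2:ℝ) ^ (-(1/4) : ℝ)) := by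
  set q : ℝ := (2:ℝ) ^ (-(1/4) : ℝ) with hq
  have hq0 : 0 < q := by positivity
  have hq1 : q < 1 := Real.rpow_lt_one_of_one_lt_of_neg (by norm_num) (by norm_num)
  set D := 6 * C * (Real.exp 2 * 4) ^ d * ρ⁻¹ with hD
  have hD0 : 0 < D := by positivity
  have ht0 : 0 < t := by linarith
  have hst : 1 / 3 ≤ √t := Real.le_sqrt_of_sq_le (by norm_num; linarith)
  have step : ∀ j, k ≤ j → j + 1 ≤ k + n → II σ t F x m (2 ^ j) - II σ t F x m (2 ^ (j + 1)) ≤ D * q ^ j := by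
    intro j hj hj1
    have h1 := II_diff σ ht0 hC0 hC F x m (N := 2 ^ j) (by positivity)
    rw [show (2:ℝ) * 2 ^ j = 2 ^ (j + 1) by rw [pow_succ]; ring] at h1
    have h2 := WW0_bound F x m (j + 1) hx hm (by positivity) (hB (j + 1) (by omega) hj1)
    have hW : WW F x m (2 ^ (j + 1)) 0 ≤ 1 * (ρ⁻¹ * (2:ℝ) ^ (((j + 1 : ℕ) : ℝ) * ε) / 2 ^ ((j + 1) * d) * (Real.exp 2 * 4) ^ d) :=
      h2.trans (mul_le_mul_of_nonneg_right hm1 (by positivity))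
    have h3 : ((2:ℝ) ^ (j + 1)) ^ d * WW F x m (2 ^ (j + 1)) 0 ≤ ρ⁻¹ * (2:ℝ) ^ (((j + 1 : ℕ) : ℝ) * ε) * (Real.exp 2 * 4) ^ d := by
      calc _ ≤ ((2:ℝ) ^ (j + 1)) ^ d * _ := mul_le_mul_of_nonneg_left hW (by positivity)
        _ = _ := by rw [← pow_mul]; field_simp
    have h4 : C / (√t * √(2 ^ j)) ≤ 3 * C / √(2 ^ j) := by
      rw [div_le_div_iff₀ (by positivity) (by positivity)]
      have : 0 < √((2:ℝ) ^ j) := by positivity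
      have : 0 < C * √((2:ℝ) ^ j) := by positivity
      nlinarith
    have h5 := pow_step j hε
    calc _ ≤ |II σ t F x m (2 ^ (j + 1)) - II σ t F x m (2 ^ j)| := by rw [abs_sub_comm]; exact le_abs_self _
      _ ≤ _ := h1
      _ ≤ C / (√t * √(2 ^ j)) * (ρ⁻¹ * (2:ℝ) ^ (((j + 1 : ℕ) : ℝ) * ε) * (Real.exp 2 * 4) ^ d) := mul_le_mul_of_nonneg_left h3 (by positivity)
      _ ≤ 3 * C / √(2 ^ j) * (ρ⁻¹ * (2:ℝ) ^ (((j + 1 : ℕ) : ℝ) * ε) * (Real.exp 2 * 4) ^ d) := mul_le_mul_of_nonneg_right h4 (by positivity)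
      _ = 3 * C * (Real.exp 2 * 4) ^ d * ρ⁻¹ * ((2:ℝ) ^ (((j + 1 : ℕ) : ℝ) * ε) / √(2 ^ j)) := by ring
      _ ≤ 3 * C * (Real.exp 2 * 4) ^ d * ρ⁻¹ * (2 * q ^ j) := mul_le_mul_of_nonneg_left h5 (by positivity)
      _ = _ := by rw [hD]; ring
  have tele : ∀ n', n' ≤ n → II σ t F x m (2 ^ k) - II σ t F x m (2 ^ (k + n')) ≤ D * q ^ k * ((1 - q ^ n') / (1 - q)) := by
    intro n' hn'
    induction n' with
    | zero => simp
    | succ i ih =>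
      have a := ih (by omega)
      have b := step (k + i) (by omega) (by omega)
      have hne : 1 - q ≠ 0 := by linarith
      have e : D * q ^ k * ((1 - q ^ (i + 1)) / (1 - q)) = D * q ^ k * ((1 - q ^ i) / (1 - q)) + D * q ^ (k + i) := by
        rw [pow_add q k i]; field_simp; ring
      rw [e, ← add_assoc k i 1]; linarith
  refine (tele n le_rfl).trans ?_
  rw [← mul_div_assoc]
  have h1q : 0 < 1 - q := by linarith
  refine div_le_div_of_nonneg_right ?_ h1q.le
  have : 0 ≤ q ^ n := by positivity
  have h2 : 0 ≤ D * q ^ k := by positivity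
  nlinarith

theorem local_dist {d : ℕ} (hd : 2 ≤ d) {ρ : ℝ} (hρ : 0 < ρ) (hρ2 : ρ < (2:ℝ)⁻¹ ^ d / 12) :
    ∃ ε : ℝ, 0 < ε ∧ ε ≤ 1 / 4 ∧ ∀ E : Set (Euc d), E ⊆ unitCube d → AnalyticSet E →
      ENNReal.ofReal (1 - ρ) < TC ccode (wt (d - ε)) E →
      ∀ t ∈ Icc (1 / 8 : ℝ) (1 / 4), ∃ x ∈ E, ∃ y ∈ E, dist x y = t := by
  obtain ⟨σ, hσp, hσ, C, hC0, hC⟩ := sphere_meas hd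
  set q : ℝ := (2:ℝ) ^ (-(1/4) : ℝ) with hq
  have hq0 : 0 < q := by positivity
  have hq1 : q < 1 := Real.rpow_lt_one_of_one_lt_of_neg (by norm_num) (by norm_num)
  set D := 6 * C * (Real.exp 2 * 4) ^ d * ρ⁻¹ with hD
  set c := ((2:ℝ)⁻¹ ^ d - 6 * ρ) * Real.exp (-d) with hc
  have hc0 : 0 < c := mul_pos (by linarith [show (0:ℝ) < (2:ℝ)⁻¹ ^ d by positivity]) (Real.exp_pos _)
  have hp1 : (2:ℝ)⁻¹ ^ d ≤ 1 := pow_le_one₀ (by norm_num) (by norm_num)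
  have hρ1 : ρ < 1 := by linarith
  obtain ⟨l, hl1, hl⟩ : ∃ l : ℕ, 1 ≤ l ∧ D * q ^ (l + 1) / (1 - q) < c / 2 := by
    have h1 : Tendsto (fun l : ℕ => D * q ^ (l + 1) / (1 - q)) atTop (𝓝 (D * 0 / (1 - q))) :=
      (((tendsto_pow_atTop_nhds_zero_of_lt_one hq0.le hq1).comp (tendsto_add_atTop_nat 1)).const_mul D).div_const _
    rw [mul_zero, zero_div] at h1
    have h2 := h1.eventually_lt_const (show 0 < c / 2 by positivity)
    exact ((eventually_ge_atTop 1).and h2).exists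
  set k := l + 1 with hk
  obtain ⟨ε, hε0, hε4, hεk⟩ : ∃ ε : ℝ, 0 < ε ∧ ε ≤ 1 / 4 ∧ (1 - ρ) * (2:ℝ) ^ (k * ε) ≤ 1 := by
    have hcont : Continuous (fun ε : ℝ => (1 - ρ) * (2:ℝ) ^ (k * ε)) := by
      refine continuous_const.mul (Continuous.rpow continuous_const (by fun_prop) fun _ => Or.inl (by norm_num))
    have h1 := (hcont.tendsto 0).mono_left (nhdsWithin_le_nhds (s := Ioi 0))
    have h2 := h1.eventually_lt_const (u := 1) (by simp; exact hρ)
    have h3 : ∀ᶠ ε : ℝ in 𝓝[>] 0, ε ∈ Ioo (0:ℝ) (1/4) := Ioo_mem_nhdsGT (by norm_num)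
    obtain ⟨ε, h4, h5⟩ := (h2.and h3).exists
    exact ⟨ε, h5.1, h5.2.le, h4.le⟩
  refine ⟨ε, hε0, hε4, fun E hE hEa hcap t ht => ?_⟩
  by_contra hno
  push Not at hno
  have ht0 : 0 < t := by linarith [ht.1]
  obtain ⟨K, hKE, hK, hU⟩ := capacitable (Φ := fun V => TC ccode (wt (d - ε)) V)
    (fun E hE hc => TC_iUnion ccode_par (TC_ne_top _) hE hc) hEa hcap
  obtain ⟨δ, hδ, hδK⟩ : ∃ δ > 0, ∀ x ∈ K, ∀ y ∈ K, δ ≤ |dist x y - t| := by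
    have hcl : IsClosed ((fun p : Euc d × Euc d => dist p.1 p.2) '' (K ×ˢ K)) :=
      ((hK.prod hK).image (by fun_prop)).isClosed
    have hnt : t ∈ ((fun p : Euc d × Euc d => dist p.1 p.2) '' (K ×ˢ K))ᶜ := by
      rintro ⟨p, hp, h⟩
      exact hno _ (hKE hp.1) _ (hKE hp.2) h
    obtain ⟨δ, hδ, hb⟩ := Metric.isOpen_iff.1 hcl.isOpen_compl t hnt
    refine ⟨δ, hδ, fun x hx y hy => ?_⟩
    by_contra hlt
    push Not at hlt
    exact hb (show dist x y ∈ ball t δ from hlt) ⟨(x, y), ⟨hx, hy⟩, rfl⟩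
  obtain ⟨V, hVU, hVE, hVc⟩ := hU (thickening (δ / 4) K) isOpen_thickening (self_subset_thickening (by positivity) K)
  have hgap : ∀ x ∈ V, ∀ y ∈ V, δ / 2 ≤ |dist x y - t| := by
    intro x hx y hy
    obtain ⟨x', hx', hxx⟩ := mem_thickening_iff.1 (hVU hx)
    obtain ⟨y', hy', hyy⟩ := mem_thickening_iff.1 (hVU hy)
    have h1 := hδK x' hx' y' hy'
    have h2 : |dist x y - dist x' y'| ≤ dist x x' + dist y y' := by
      have := dist_dist_dist_le x y x' y'
      rwa [Real.dist_eq] at this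
    have h3 : |dist x' y' - t| ≤ |dist x y - dist x' y'| + |dist x y - t| := by
      rw [abs_sub_comm (dist x y) (dist x' y')]
      exact abs_sub_le _ _ _
    linarith
  obtain ⟨n, hn⟩ : ∃ n : ℕ, ((2:ℝ) ^ (k + n)) ^ d * Real.exp (-(((2:ℝ) ^ (k + n)) ^ 2 * (δ / 2) ^ 2 / 4)) < c / 2 := by
    have hN : Tendsto (fun n : ℕ => (2:ℝ) ^ (k + n)) atTop atTop := by
      have h := (tendsto_pow_atTop_atTop_of_one_lt (show (1:ℝ) < 2 by norm_num)).comp (tendsto_add_atTop_nat k)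
      refine h.congr fun n => ?_
      simp [add_comm]
    have h1 := (Real.tendsto_pow_mul_exp_neg_atTop_nhds_zero d).comp hN
    have h2 := h1.eventually_lt_const (show 0 < c / 2 by positivity)
    have h3 := hN.eventually_ge_atTop (16 / δ ^ 2)
    obtain ⟨n, h4, h5⟩ := (h2.and h3).exists
    refine ⟨n, lt_of_le_of_lt ?_ h4⟩
    simp only [Function.comp]
    set N := (2:ℝ) ^ (k + n)
    have hN0 : 0 < N := by positivity
    refine mul_le_mul_of_nonneg_left (Real.exp_le_exp.2 (neg_le_neg ?_)) (by positivity)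
    rw [div_le_iff₀ (by positivity)] at h5
    nlinarith
  obtain ⟨F, x, m, G, hx, hm, hm1, hB, hG, hGc, hGm⟩ := exists_measure hρ hρ1 k n hε0.le hεk hVc
  have hxc : ∀ p ∈ F, x p ∈ unitCube d := fun p hp => hE (hVE (hx p hp))
  have hlow : c ≤ II σ t F x m (2 ^ k) :=
    II_lower σ hσ ht0 ht.2 F x m fun z hz => WW_lower F x m l hl1 hxc hm G hG hGc hGm z hz
  have hup := II_upper σ hσ ht0 (half_pos hδ) F x m hm hm1 (N := 2 ^ (k + n)) (by positivity)
    fun p hp q hq => hgap _ (hx p hp) _ (hx q hq)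
  have htel := II_tele σ ht.1 hC0 hC hε4 hρ F x m k n hxc hm hm1 hB
  linarith


theorem statement8_aux (d : ℕ) (hd : 2 ≤ d) :
    ∃ ρ₀ : ℝ, 0 < ρ₀ ∧ ∀ ρ : ℝ, 0 < ρ → ρ < ρ₀ →
      ∃ a b ε : ℝ, 0 < a ∧ a < b ∧ b < 1 ∧ 0 < ε ∧
        ∀ A : Set (Euc d), MeasurableSet A →
        ∀ s : ℝ, (d : ℝ) - ε < s →
        ∀ R : ℕ → ℝ, Tendsto R atTop atTop →
          (∀ n, R (n+1) / R n ≤ b / a) →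
          (∀ᶠ n in atTop,
            ENNReal.ofReal (1 - ρ) < ⨆ x : Euc d, dyadicContent s (normTrunc A (R n) x)) →
          ∃ M : ℝ, 0 < M ∧ Ici M ⊆ distSet A A := by
  refine ⟨(2:ℝ)⁻¹ ^ d / 12, by positivity, fun ρ hρ hρ2 => ?_⟩
  obtain ⟨ε, hε0, hε4, hloc⟩ := local_dist hd hρ hρ2
  refine ⟨1 / 8, 1 / 4, ε, by norm_num, by norm_num, by norm_num, hε0, ?_⟩
  intro A hA s hs R hR hratio hev
  have hd2 : (2:ℝ) ≤ d := by exact_mod_cast hd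
  obtain ⟨n0, hn0⟩ := eventually_atTop.1 (hev.and (hR.eventually_ge_atTop 1))
  refine ⟨|R n0| / 4 + 1, by positivity, fun τ hτ => ?_⟩
  rw [mem_Ici] at hτ
  have hτ0 : 0 < τ := by linarith [abs_nonneg (R n0)]
  have hex : ∃ n, n0 ≤ n ∧ 4 * τ ≤ R n :=
    ((eventually_ge_atTop n0).and (hR.eventually_ge_atTop (4 * τ))).exists
  classical
  obtain ⟨n, hn, hmin⟩ : ∃ n, (n0 ≤ n ∧ 4 * τ ≤ R n) ∧ ∀ k < n, ¬ (n0 ≤ k ∧ 4 * τ ≤ R k) :=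
    ⟨Nat.find hex, Nat.find_spec hex, fun k hk => Nat.find_min hex hk⟩
  have hne : n ≠ n0 := by
    rintro rfl
    linarith [le_abs_self (R n), hn.2]
  obtain ⟨p, rfl⟩ : ∃ p, n = p + 1 := ⟨n - 1, by omega⟩
  have hp : R p < 4 * τ := by
    have := hmin p (by omega)
    by_contra h
    exact this ⟨by omega, by linarith⟩
  have hRp : 1 ≤ R p := (hn0 p (by omega)).2
  have hRn : 1 ≤ R (p + 1) := (hn0 (p + 1) (by omega)).2
  have hr := hratio p
  rw [div_le_iff₀ (by linarith)] at hr
  have hR0 : 0 < R (p + 1) := by linarith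
  obtain ⟨x, hx⟩ := lt_iSup_iff.1 (hn0 (p + 1) (by omega)).1
  set r := R (p + 1) with hrdef
  have hsub : normTrunc A r x ⊆ unitCube d := by
    rintro _ ⟨y, ⟨_, hy⟩, rfl⟩ i
    have h := hy i
    simp only [PiLp.smul_apply, PiLp.sub_apply, smul_eq_mul]
    rw [← div_eq_inv_mul]
    exact ⟨div_nonneg h.1 hR0.le, (div_le_one hR0).2 h.2⟩
  have hana : AnalyticSet (normTrunc A r x) := by
    refine AnalyticSet.image_of_continuous (MeasurableSet.analyticSet (hA.inter ?_)) (by fun_prop)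
    have : {y : Euc d | ∀ i, y i - x i ∈ Icc (0:ℝ) r} = ⋂ i, (fun y : Euc d => y i - x i) ⁻¹' (Icc 0 r) := by
      ext y; simp
    rw [this]
    exact MeasurableSet.iInter fun i => measurableSet_Icc.preimage (by fun_prop)
  have hcap := hx.trans_le (content_le (by linarith) hs.le hsub)
  obtain ⟨_, ⟨y, ⟨hyA, _⟩, rfl⟩, _, ⟨z, ⟨hzA, _⟩, rfl⟩, hyz⟩ := hloc _ hsub hana hcap (τ / r)
    ⟨by rw [le_div_iff₀ hR0]; norm_num at hr; linarith, by rw [div_le_iff₀ hR0]; linarith [hn.2]⟩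
  refine ⟨y, hyA, z, hzA, ?_⟩
  simp only at hyz
  rw [dist_smul₀, dist_sub_right, Real.norm_of_nonneg (by positivity), ← div_eq_inv_mul] at hyz
  rwa [div_left_inj' hR0.ne'] at hyz

/-- Theorem 1.10: for `d ≥ 2` and all sufficiently small `ρ`, with constants
`0 < a_ρ < b_ρ < 1`, `ε_ρ > 0`: if a Borel set `A ⊆ ℝ^d` admits an exponent
`s > d - ε_ρ` and a sequence `R_n → ∞` with `R_{n+1}/R_n ≤ b_ρ/a_ρ` such that
`sup_x H^s_∞(A_{R_n}(x)) > 1 - ρ` for all sufficiently large `n`, then `A` admits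
all sufficiently large distances. -/
theorem statement8 (d : ℕ) (hd : 2 ≤ d) :
    ∃ ρ₀ : ℝ, 0 < ρ₀ ∧ ∀ ρ : ℝ, 0 < ρ → ρ < ρ₀ →
      ∃ a b ε : ℝ, 0 < a ∧ a < b ∧ b < 1 ∧ 0 < ε ∧
        ∀ A : Set (Euc d), MeasurableSet A →
        ∀ s : ℝ, (d : ℝ) - ε < s →
        ∀ R : ℕ → ℝ, Tendsto R atTop atTop →
          (∀ n, R (n+1) / R n ≤ b / a) →
          (∀ᶠ n in atTop,
            ENNReal.ofReal (1 - ρ) < ⨆ x : Euc d, dyadicContent s (normTrunc A (R n) x)) →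
          ∃ M : ℝ, 0 < M ∧ Ici M ⊆ distSet A A := by
  exact statement8_aux d hd
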